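/- Let E = E(2,M,p) be a planar fractal percolation with integer M ≥ 2 and 0 < p ≤ 1. Then for ℙ(·|E ≠ ∅)-almost every realization, for ALL straight lines ℓ that are not parallel to the coordinate axes, the orthogonal projection proj_ℓ(E) of E onto ℓ satisfies dim_H(proj_ℓ(E)) = min{1, dim_H(E)}, where dim_H denotes Hausdorff dimension. -/

import Mathlib

open MeasureTheory Set ENNReal ProbabilityTheory Real

noncomputable section

/-- The alphabet indexing the `M^d` subcubes of a cube in `[0,1]^d`. -/
abbrev Alpha (d M : ℕ) : Type := Fin d → Fin M

/-- Finite nonempty words over the alphabet; they index `M`-adic cubes. -/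
abbrev Word (d M : ℕ) : Type := {w : List (Alpha d M) // w ≠ []}

/-- The sample space: `{0,1}`-labelings of all finite nonempty words. -/
abbrev PercSpace (d M : ℕ) : Type := Word d M → Bool

/-- `P` is the product measure making the labels i.i.d. Bernoulli(`p`). -/
def IsBernoulliPerc (d M : ℕ) (p : ℝ) (P : Measure (PercSpace d M)) : Prop :=
  IsProbabilityMeasure P ∧
    ∀ (S : Finset (Word d M)) (b : Word d M → Bool),
      P {ω | ∀ w ∈ S, ω w = b w} =
        ∏ w ∈ S, if b w then ENNReal.ofReal p else ENNReal.ofReal (1 - p)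

/-- A level-`w.length` cube is retained iff its word and every nonempty prefix
of its word carry label 1. -/
def Retained (d M : ℕ) (ω : PercSpace d M) (w : List (Alpha d M)) : Prop :=
  ∀ (u : List (Alpha d M)) (hu : u ≠ []), u <+: w → ω ⟨u, hu⟩ = true

/-- The `i`-th coordinate of the lower-left corner of the cube indexed by `w`. -/
def wordBase (d M : ℕ) (w : List (Alpha d M)) (i : Fin d) : ℝ :=
  ∑ j : Fin w.length, ((w.get j) i : ℝ) * (M : ℝ) ^ (-(j : ℤ) - 1)

/-- The closed `M`-adic cube of level `w.length` indexed by the word `w`. -/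
def wordCube (d M : ℕ) (w : List (Alpha d M)) : Set (EuclideanSpace ℝ (Fin d)) :=
  {x | ∀ i, wordBase d M w i ≤ x i ∧ x i ≤ wordBase d M w i + (M : ℝ) ^ (-(w.length : ℤ))}

/-- `E_n`, the union of the retained level-`n` cubes. -/
def approx (d M : ℕ) (ω : PercSpace d M) (n : ℕ) : Set (EuclideanSpace ℝ (Fin d)) :=
  ⋃ w ∈ {w : List (Alpha d M) | w.length = n ∧ Retained d M ω w}, wordCube d M w

/-- The fractal percolation set `E = ⋂_{n ≥ 1} E_n`. -/
def percLimit (d M : ℕ) (ω : PercSpace d M) : Set (EuclideanSpace ℝ (Fin d)) :=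
  ⋂ n ∈ {n : ℕ | 1 ≤ n}, approx d M ω n

/-- The segment cut out of `[0,1]²` by the line through `z` with direction `v`. -/
def lineSeg (z v : EuclideanSpace ℝ (Fin 2)) : Set (EuclideanSpace ℝ (Fin 2)) :=
  {x | (∃ t : ℝ, x = z + t • v) ∧ ∀ i, 0 ≤ x i ∧ x i ≤ 1}

/-- Orthogonal projection of the plane onto the line through `z` with direction `v`. -/
def lineProj (z v : EuclideanSpace ℝ (Fin 2)) (x : EuclideanSpace ℝ (Fin 2)) :
    EuclideanSpace ℝ (Fin 2) :=
  z + ((@inner ℝ _ _ (x - z) v) / (@inner ℝ _ _ v v)) • v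

/-!
Let `l = M ^ d * p` be the mean number of retained subcubes of a retained cube and let `t > 0`
satisfy `M ^ t < min M l`. For any direction and offset, a strip of `M`-adic cubes of level `k`
contains few retained descendants in the sense of every moment, so their number at level `m` exceeds
`l ^ m / M ^ (t * k)` with a probability decaying faster than any prescribed exponential in `k`,
whereas exponentially many strips of level `k` suffice to represent all directions and offsets at
once. By a second moment bound, with positive probability there are also at least `l ^ m / 2`
retained cubes of level `m` for infinitely many `m`. On that event no projection admits a cover by
intervals whose `t`-dimensional sum is small: the strips above these intervals would contain all
the retained cubes. Hence the labelings for which *some* projection has dimension less than `t` have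
probability less than one.

If `E` has a projection of dimension less than `t`, then so has the part of `E` in each retained
first-level cube, because this part is a rescaled copy of a fractal percolation. The probability
`q` of that event therefore satisfies `q ≤ (1 - p + p * q) ^ M ^ d`, which together with `q < 1` and
strict convexity bounds `q` by the extinction probability. Letting `t` increase to `min 1 (dim E)`
along the rationals, with the upper bound `l ≤ M ^ dim E` failing only on a null set by a first
moment estimate, gives the lower bound simultaneously for all lines.
-/

namespace FractalPercolation

/-! ### Words and cubes -/

section Words

variable {d M : ℕ}

/-- The integer `i`-th coordinate, in units of `M ^ (-w.length)`, of the lower-left corner of the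
cube indexed by `w`: its base-`M` digits are the `i`-th coordinates of the letters of `w`, most
significant first. -/
def wordIndex (i : Fin d) (w : List (Alpha d M)) : ℕ :=
  Nat.ofDigits M (w.map fun a => (a i : ℕ)).reverse

lemma wordIndex_append (i : Fin d) (u v : List (Alpha d M)) :
    wordIndex i (u ++ v) = wordIndex i u * M ^ v.length + wordIndex i v := by
  simp only [wordIndex, List.map_append, List.reverse_append, Nat.ofDigits_append,
    List.length_reverse, List.length_map]
  ring

lemma wordIndex_cons (i : Fin d) (a : Alpha d M) (w : List (Alpha d M)) :
    wordIndex i (a :: w) = a i * M ^ w.length + wordIndex i w := by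
  simpa [wordIndex] using wordIndex_append i [a] w

lemma wordIndex_lt (hM : 1 < M) (i : Fin d) (w : List (Alpha d M)) :
    wordIndex i w < M ^ w.length := by
  simpa [wordIndex] using
    Nat.ofDigits_lt_base_pow_length (l := (w.map fun a => (a i : ℕ)).reverse) hM (by simp)

lemma eq_of_wordIndex_eq (hM : 1 < M) {u v : List (Alpha d M)} (hlen : u.length = v.length)
    (h : ∀ i, wordIndex i u = wordIndex i v) : u = v := by
  refine List.ext_getElem hlen fun j hu hv => funext fun i => Fin.ext ?_
  have hdigits := List.reverse_injective <|
    Nat.ofDigits_inj_of_len_eq hM (by simp [hlen]) (by simp) (by simp) (h i)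
  simpa [hu, hv] using congrArg (·[j]?) hdigits

lemma wordBase_cons (hM : M ≠ 0) (a : Alpha d M) (w : List (Alpha d M)) (i : Fin d) :
    wordBase d M (a :: w) i = (a i + wordBase d M w i) / M := by
  have hM0 : (M : ℝ) ≠ 0 := Nat.cast_ne_zero.2 hM
  rw [add_div]
  simp only [wordBase, List.length_cons]
  rw [Fin.sum_univ_succ, Finset.sum_div]
  congr 1
  · simp only [List.get_eq_getElem, Fin.val_zero, Nat.cast_zero, neg_zero, zero_sub, zpow_neg_one,
      div_eq_mul_inv]
    rfl
  · refine Finset.sum_congr rfl fun j _ => ?_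
    simp only [List.get_eq_getElem, Fin.val_succ, List.getElem_cons_succ]
    rw [mul_div_assoc, div_eq_mul_inv (_ ^ _), ← zpow_sub_one₀ hM0]
    push_cast
    ring_nf

lemma wordBase_eq_wordIndex_div (hM : M ≠ 0) (w : List (Alpha d M)) (i : Fin d) :
    wordBase d M w i = wordIndex i w / (M : ℝ) ^ w.length := by
  have hM0 : (M : ℝ) ≠ 0 := Nat.cast_ne_zero.2 hM
  induction w with
  | nil => simp [wordBase, wordIndex]
  | cons a w ih =>
    rw [wordBase_cons hM, ih, wordIndex_cons, List.length_cons]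
    push_cast
    field_simp
    ring

lemma wordBase_append (hM : M ≠ 0) (u v : List (Alpha d M)) (i : Fin d) :
    wordBase d M (u ++ v) i = wordBase d M u i + wordBase d M v i / (M : ℝ) ^ u.length := by
  have : (M : ℝ) ≠ 0 := Nat.cast_ne_zero.2 hM
  simp only [wordBase_eq_wordIndex_div hM, wordIndex_append, List.length_append, pow_add]
  push_cast
  field_simp

lemma wordBase_nonneg (hM : M ≠ 0) (w : List (Alpha d M)) (i : Fin d) : 0 ≤ wordBase d M w i := by
  rw [wordBase_eq_wordIndex_div hM]
  positivity

lemma wordBase_add_le_one (hM : 1 < M) (w : List (Alpha d M)) (i : Fin d) :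
    wordBase d M w i + ((M : ℝ) ^ w.length)⁻¹ ≤ 1 := by
  rw [wordBase_eq_wordIndex_div (by lia), ← one_div, ← add_div, div_le_one (by positivity)]
  exact_mod_cast wordIndex_lt hM i w

lemma mem_wordCube {w : List (Alpha d M)} {x : EuclideanSpace ℝ (Fin d)} :
    x ∈ wordCube d M w ↔
      ∀ i, wordBase d M w i ≤ x i ∧ x i ≤ wordBase d M w i + ((M : ℝ) ^ w.length)⁻¹ := by
  simp [wordCube]

lemma wordCube_append_subset (hM : 1 < M) (u v : List (Alpha d M)) :
    wordCube d M (u ++ v) ⊆ wordCube d M u := by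
  intro x hx
  rw [mem_wordCube] at hx ⊢
  have hpos : (0 : ℝ) < ((M : ℝ) ^ u.length)⁻¹ := by positivity
  intro i
  obtain ⟨hlo, hhi⟩ := hx i
  rw [wordBase_append (by lia), div_eq_mul_inv] at hlo hhi
  rw [List.length_append, pow_add, mul_inv] at hhi
  have hnonneg := wordBase_nonneg (by lia) v i
  have hle := wordBase_add_le_one hM v i
  constructor <;> nlinarith

lemma wordCube_subset_of_prefix (hM : 1 < M) {u w : List (Alpha d M)} (h : u <+: w) :
    wordCube d M w ⊆ wordCube d M u := by
  obtain ⟨v, rfl⟩ := h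
  exact wordCube_append_subset hM u v

variable (d M) in
/-- The words of length `m`, indexing the level-`m` cubes. -/
def words (m : ℕ) : Finset (List (Alpha d M)) :=
  (List.finite_length_eq (Alpha d M) m).toFinset

@[simp]
lemma mem_words {m : ℕ} {w : List (Alpha d M)} : w ∈ words d M m ↔ w.length = m := by
  simp [words]

lemma card_words (m : ℕ) : (words d M m).card = (M ^ d) ^ m := by
  have h : words d M m = (Finset.univ : Finset (List.Vector (Alpha d M) m)).map
      ⟨List.Vector.toList, List.Vector.toList_injective⟩ := by
    ext w
    simp only [mem_words, Finset.mem_map, Finset.mem_univ, true_and, Function.Embedding.coeFn_mk]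
    exact ⟨fun hw => ⟨⟨w, hw⟩, rfl⟩, fun ⟨v, hv⟩ => hv ▸ v.toList_length⟩
  rw [h, Finset.card_map, Finset.card_univ, card_vector]
  simp

lemma retained_of_prefix {ω : PercSpace d M} {u w : List (Alpha d M)} (h : u <+: w)
    (hw : Retained d M ω w) : Retained d M ω u :=
  fun x hx hxu => hw x hx (hxu.trans h)

lemma mem_approx {ω : PercSpace d M} {n : ℕ} {x : EuclideanSpace ℝ (Fin d)} :
    x ∈ approx d M ω n ↔ ∃ w ∈ words d M n, Retained d M ω w ∧ x ∈ wordCube d M w := by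
  simp [approx, and_assoc]

lemma approx_antitone (hM : 1 < M) (ω : PercSpace d M) : Antitone (approx d M ω) := by
  intro n m h x hx
  obtain ⟨w, hw, hret, hx⟩ := mem_approx.1 hx
  rw [mem_words] at hw
  exact mem_approx.2 ⟨w.take n, by simp [hw, h], retained_of_prefix (w.take_prefix n) hret,
    wordCube_subset_of_prefix hM (w.take_prefix n) hx⟩

lemma percLimit_subset_approx {n : ℕ} (hM : 1 < M) (ω : PercSpace d M) :
    percLimit d M ω ⊆ approx d M ω n :=
  (biInter_subset_of_mem (show n + 1 ∈ {n | 1 ≤ n} by simp)).trans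
    (approx_antitone hM ω n.le_succ)

lemma isCompact_wordCube (w : List (Alpha d M)) : IsCompact (wordCube d M w) := by
  convert (isCompact_univ_pi fun i => isCompact_Icc (a := wordBase d M w i)
    (b := wordBase d M w i + ((M : ℝ) ^ w.length)⁻¹)).image (PiLp.continuous_toLp 2 _) using 1
  ext x
  rw [mem_wordCube]
  simp only [mem_image, Set.mem_pi, mem_univ, mem_Icc, forall_const]
  exact ⟨fun h => ⟨x.ofLp, h, rfl⟩, by rintro ⟨y, hy, rfl⟩; exact hy⟩

lemma isCompact_approx (ω : PercSpace d M) (n : ℕ) : IsCompact (approx d M ω n) := by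
  refine Set.Finite.isCompact_biUnion ?_ fun w _ => isCompact_wordCube w
  exact (List.finite_length_eq (Alpha d M) n).subset fun w hw => hw.1

lemma percLimit_eq_iInter (hM : 1 < M) (ω : PercSpace d M) :
    percLimit d M ω = ⋂ n, approx d M ω n :=
  (subset_iInter fun _ => percLimit_subset_approx hM ω).antisymm
    (subset_iInter₂ fun n _ => iInter_subset _ n)

lemma exists_approx_subset_of_isOpen (hM : 1 < M) (ω : PercSpace d M)
    {U : Set (EuclideanSpace ℝ (Fin d))} (hU : IsOpen U) (h : percLimit d M ω ⊆ U) :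
    ∃ n, approx d M ω n ⊆ U :=
  exists_subset_nhds_of_isCompact (approx_antitone hM ω).directed_ge (isCompact_approx ω)
    fun _ hx => hU.mem_nhds (h (percLimit_eq_iInter hM ω ▸ hx))

end Words

/-! ### Retention probabilities -/

section Retention

variable {d M : ℕ}

/-- The nonempty prefixes of `w`, i.e. the words whose labels decide whether `w` is retained. -/
def prefixes (w : List (Alpha d M)) : Finset (Word d M) :=
  w.inits.toFinset.subtype (· ≠ [])

@[simp]
lemma mem_prefixes {w : List (Alpha d M)} {u : Word d M} : u ∈ prefixes w ↔ u.1 <+: w := by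
  simp [prefixes]

lemma card_filter_lt_length_prefixes (w : List (Alpha d M)) (j : ℕ) :
    ((prefixes w).filter fun u => j < u.1.length).card = w.length - j := by
  have himage : ((prefixes w).filter fun u => j < u.1.length).image (fun u => u.1.length) =
      Finset.Ioc j w.length := by
    ext k
    simp only [Finset.mem_image, Finset.mem_filter, mem_prefixes, Finset.mem_Ioc]
    constructor
    · rintro ⟨u, ⟨hu, hj⟩, rfl⟩
      exact ⟨hj, hu.length_le⟩
    · rintro ⟨hj, hk⟩
      have hlen : (w.take k).length = k := by simpa using hk
      exact ⟨⟨w.take k, List.ne_nil_of_length_pos (by lia)⟩,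
        ⟨w.take_prefix k, by simpa [hlen] using hj⟩, hlen⟩
  rw [← Nat.card_Ioc, ← himage, Finset.card_image_of_injOn]
  intro u hu v hv huv
  simp only [Finset.coe_filter, mem_prefixes, mem_ofPred_eq] at hu hv
  exact Subtype.ext ((List.prefix_of_prefix_length_le hu.1 hv.1 huv.le).eq_of_length huv)

lemma card_prefixes (w : List (Alpha d M)) : (prefixes w).card = w.length := by
  rw [← Nat.sub_zero w.length, ← card_filter_lt_length_prefixes, Finset.filter_true_of_mem]
  exact fun u _ => List.length_pos_iff.2 u.2

lemma retained_iff_forall_prefixes {ω : PercSpace d M} {w : List (Alpha d M)} :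
    Retained d M ω w ↔ ∀ u ∈ prefixes w, ω u = true := by
  simp [Retained, Word, Subtype.forall]

lemma forall_retained_iff {ω : PercSpace d M} {S : Finset (List (Alpha d M))} :
    (∀ w ∈ S, Retained d M ω w) ↔ ∀ u ∈ S.biUnion prefixes, ω u = true := by
  simp only [retained_iff_forall_prefixes, Finset.mem_biUnion, forall_exists_index, and_imp]
  exact ⟨fun h u w hw hu => h w hw u hu, fun h w hw u hu => h u w hw hu⟩

lemma measurableSet_retained (w : List (Alpha d M)) :
    MeasurableSet {ω : PercSpace d M | Retained d M ω w} := by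
  simp_rw [retained_iff_forall_prefixes, ofPred_forall]
  exact Finset.measurableSet_biInter _ fun u _ => measurable_pi_apply u (measurableSet_singleton _)

variable {p : ℝ} {P : Measure (PercSpace d M)}

lemma measure_forall_retained (hP : IsBernoulliPerc d M p P) (S : Finset (List (Alpha d M))) :
    P {ω | ∀ w ∈ S, Retained d M ω w} = ENNReal.ofReal p ^ (S.biUnion prefixes).card := by
  simp_rw [forall_retained_iff]
  simpa using hP.2 (S.biUnion prefixes) fun _ => true

lemma measure_retained (hP : IsBernoulliPerc d M p P) (w : List (Alpha d M)) :
    P {ω | Retained d M ω w} = ENNReal.ofReal p ^ w.length := by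
  simpa [card_prefixes] using measure_forall_retained hP {w}

/-- An upper bound for the conditional probability that `w` is retained given that `v` is: the sum,
over the common prefixes of `v` and `w`, of the probability that `w` is retained given that this
prefix is. -/
def branchWeight (q : ℝ≥0∞) (v w : List (Alpha d M)) : ℝ≥0∞ :=
  ∑ j ∈ Finset.range (w.length + 1), if w.take j = v.take j then q ^ (w.length - j) else 0

lemma pow_card_prefixes_sdiff_le {q : ℝ≥0∞} (hq : q ≤ 1) (S : Finset (List (Alpha d M)))
    (w : List (Alpha d M)) :
    q ^ (prefixes w \ S.biUnion prefixes).card ≤ q ^ w.length + ∑ v ∈ S, branchWeight q v w := by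
  rcases (prefixes w ∩ S.biUnion prefixes).eq_empty_or_nonempty with hempty | hne
  · rw [Finset.sdiff_eq_self_of_disjoint (Finset.disjoint_iff_inter_eq_empty.2 hempty),
      card_prefixes]
    exact le_self_add
  obtain ⟨u, hu, hmax⟩ := Finset.exists_max_image _ (fun u => u.1.length) hne
  simp only [Finset.mem_inter, Finset.mem_biUnion, mem_prefixes] at hu hmax
  obtain ⟨huw, v, hv, huv⟩ := hu
  have hcard : w.length - u.1.length ≤ (prefixes w \ S.biUnion prefixes).card := by
    rw [← card_filter_lt_length_prefixes]
    refine Finset.card_le_card fun x hx => ?_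
    simp only [Finset.mem_filter, Finset.mem_sdiff, Finset.mem_biUnion, mem_prefixes] at hx ⊢
    exact ⟨hx.1, fun h => (hmax x ⟨hx.1, h⟩).not_gt hx.2⟩
  have hshared : w.take u.1.length = v.take u.1.length := by
    rw [← List.prefix_iff_eq_take.1 huw, ← List.prefix_iff_eq_take.1 huv]
  calc q ^ (prefixes w \ S.biUnion prefixes).card
      ≤ q ^ (w.length - u.1.length) := pow_le_pow_right_of_le_one' hq hcard
    _ ≤ branchWeight q v w := by
        refine le_of_eq_of_le (if_pos hshared).symm <| Finset.single_le_sum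
          (f := fun j => if w.take j = v.take j then q ^ (w.length - j) else 0)
          (fun _ _ => zero_le) (Finset.mem_range.2 (Nat.lt_succ_of_le huw.length_le))
    _ ≤ ∑ v ∈ S, branchWeight q v w :=
        Finset.single_le_sum (f := fun v => branchWeight q v w) (fun _ _ => zero_le) hv
    _ ≤ _ := le_add_self

lemma measure_forall_retained_insert_le (hp1 : p ≤ 1) (hP : IsBernoulliPerc d M p P)
    (S : Finset (List (Alpha d M))) (w : List (Alpha d M)) :
    P {ω | ∀ v ∈ insert w S, Retained d M ω v} ≤ P {ω | ∀ v ∈ S, Retained d M ω v} *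
      (ENNReal.ofReal p ^ w.length + ∑ v ∈ S, branchWeight (ENNReal.ofReal p) v w) := by
  rw [measure_forall_retained hP, measure_forall_retained hP, Finset.biUnion_insert,
    Finset.union_comm, ← Finset.union_sdiff_self_eq_union,
    Finset.card_union_of_disjoint Finset.disjoint_sdiff, pow_add]
  gcongr
  exact pow_card_prefixes_sdiff_le (ENNReal.ofReal_le_one.2 hp1) S w

end Retention

/-! ### Moments of sums of indicators -/

section Moments

variable {Ω ι : Type*} {mΩ : MeasurableSpace Ω} {μ : Measure Ω}

/-- Conditioning on `#S` of the events multiplies the expected number of events that occur by at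
most `#S + 1`; integrating `N ^ n` one factor at a time produces a rising factorial. -/
lemma setLIntegral_sum_indicator_pow_le [DecidableEq ι] {A : ι → Set Ω}
    (hA : ∀ i, MeasurableSet (A i)) {T : Finset ι} {D : ℝ≥0∞}
    (h : ∀ S ⊆ T, ∑ i ∈ T, μ {ω | ∀ j ∈ insert i S, ω ∈ A j} ≤
      (S.card + 1) * D * μ {ω | ∀ j ∈ S, ω ∈ A j}) (n : ℕ) :
    ∀ S ⊆ T, ∫⁻ ω in {ω | ∀ j ∈ S, ω ∈ A j}, (∑ i ∈ T, (A i).indicator 1 ω) ^ n ∂μ ≤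
      (S.card + 1).ascFactorial n * D ^ n * μ {ω | ∀ j ∈ S, ω ∈ A j} := by
  induction n with
  | zero => intro S _; simp
  | succ n ih =>
    intro S hS
    set N : Ω → ℝ≥0∞ := fun ω => ∑ i ∈ T, (A i).indicator 1 ω with hN
    have hNmeas : Measurable N :=
      Finset.measurable_sum _ fun i _ => measurable_one.indicator (hA i)
    have hexpand : ∀ ω, N ω ^ (n + 1) = ∑ i ∈ T, (A i).indicator (fun ω => N ω ^ n) ω := by
      intro ω
      rw [pow_succ', hN, Finset.sum_mul]
      exact Finset.sum_congr rfl fun i _ => by by_cases hi : ω ∈ A i <;> simp [hi]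
    have hterm : ∀ i ∈ T, ∫⁻ ω in {ω | ∀ j ∈ S, ω ∈ A j}, (A i).indicator (fun ω => N ω ^ n) ω ∂μ ≤
        (S.card + 2).ascFactorial n * D ^ n * μ {ω | ∀ j ∈ insert i S, ω ∈ A j} := by
      intro i hi
      have hinter : A i ∩ {ω | ∀ j ∈ S, ω ∈ A j} = {ω | ∀ j ∈ insert i S, ω ∈ A j} := by
        ext ω; simp
      rw [lintegral_indicator (hA i), Measure.restrict_restrict (hA i), hinter]
      refine (ih (insert i S) (Finset.insert_subset hi hS)).trans ?_
      gcongr ?_ * _ * _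
      exact_mod_cast Nat.ascFactorial_le _ (Nat.succ_le_succ (Finset.card_insert_le i S))
    calc ∫⁻ ω in {ω | ∀ j ∈ S, ω ∈ A j}, N ω ^ (n + 1) ∂μ
        ≤ ∑ i ∈ T, (S.card + 2).ascFactorial n * D ^ n * μ {ω | ∀ j ∈ insert i S, ω ∈ A j} := by
          simp_rw [hexpand]
          rw [lintegral_finsetSum _ fun i _ => (hNmeas.pow_const n).indicator (hA i)]
          exact Finset.sum_le_sum hterm
      _ ≤ (S.card + 2).ascFactorial n * D ^ n *
            ((S.card + 1) * D * μ {ω | ∀ j ∈ S, ω ∈ A j}) := by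
          rw [← Finset.mul_sum]
          gcongr
          exact h S hS
      _ = (S.card + 1).ascFactorial (n + 1) * D ^ (n + 1) * μ {ω | ∀ j ∈ S, ω ∈ A j} := by
          rw [Nat.ascFactorial_succ, ← Nat.succ_ascFactorial]
          push_cast
          ring

lemma lintegral_sum_indicator_pow_le [IsProbabilityMeasure μ] [DecidableEq ι] {A : ι → Set Ω}
    (hA : ∀ i, MeasurableSet (A i)) {T : Finset ι} {D : ℝ≥0∞}
    (h : ∀ S ⊆ T, ∑ i ∈ T, μ {ω | ∀ j ∈ insert i S, ω ∈ A j} ≤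
      (S.card + 1) * D * μ {ω | ∀ j ∈ S, ω ∈ A j}) (n : ℕ) :
    ∫⁻ ω, (∑ i ∈ T, (A i).indicator 1 ω) ^ n ∂μ ≤ n.factorial * D ^ n := by
  simpa [Nat.one_ascFactorial] using
    setLIntegral_sum_indicator_pow_le hA h n ∅ (Finset.empty_subset T)

lemma sq_setLIntegral_le {X : Ω → ℝ≥0∞} (hX : AEMeasurable X μ) {A : Set Ω}
    (hA : MeasurableSet A) :
    (∫⁻ ω in A, X ω ∂μ) ^ 2 ≤ (∫⁻ ω, X ω ^ 2 ∂μ) * μ A := by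
  have hcauchy := ENNReal.lintegral_mul_le_Lp_mul_Lq μ Real.HolderConjugate.two_two hX
    ((measurable_one.indicator hA).aemeasurable (f := A.indicator (1 : Ω → ℝ≥0∞)))
  have hprod : ∫⁻ ω, (X * A.indicator (1 : Ω → ℝ≥0∞)) ω ∂μ = ∫⁻ ω in A, X ω ∂μ := by
    rw [← lintegral_indicator hA]
    exact lintegral_congr fun ω => by by_cases hω : ω ∈ A <;> simp [hω]
  have hind : ∫⁻ ω, A.indicator (1 : Ω → ℝ≥0∞) ω ^ (2 : ℝ) ∂μ = μ A := by
    rw [← lintegral_indicator_one hA]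
    exact lintegral_congr fun ω => by by_cases hω : ω ∈ A <;> simp [hω]
  rw [hprod, hind] at hcauchy
  refine (pow_le_pow_left' hcauchy 2).trans_eq ?_
  rw [mul_pow, ← ENNReal.rpow_natCast, ← ENNReal.rpow_natCast, ← ENNReal.rpow_mul,
    ← ENNReal.rpow_mul]
  simp

/-- The Paley–Zygmund inequality, with threshold half the mean. -/
lemma sq_lintegral_le_mul_measure_half_lintegral_le [IsProbabilityMeasure μ] {X : Ω → ℝ≥0∞}
    (hX : Measurable X) (hfin : ∫⁻ ω, X ω ∂μ ≠ ∞) :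
    (∫⁻ ω, X ω ∂μ) ^ 2 ≤ 4 * (∫⁻ ω, X ω ^ 2 ∂μ) * μ {ω | (∫⁻ ω, X ω ∂μ) / 2 ≤ X ω} := by
  set m := ∫⁻ ω, X ω ∂μ
  set A := {ω | m / 2 ≤ X ω}
  have hA : MeasurableSet A := measurableSet_le measurable_const hX
  have hcompl : ∫⁻ ω in Aᶜ, X ω ∂μ ≤ m / 2 := by
    calc ∫⁻ ω in Aᶜ, X ω ∂μ ≤ ∫⁻ _ in Aᶜ, m / 2 ∂μ :=
          setLIntegral_mono measurable_const fun ω (hω : ¬ m / 2 ≤ X ω) => (not_le.1 hω).le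
      _ ≤ m / 2 := by
          rw [setLIntegral_const]
          exact mul_le_of_le_one_right' prob_le_one
  have hhalf : m / 2 ≤ ∫⁻ ω in A, X ω ∂μ := by
    refine (ENNReal.add_le_add_iff_right (ENNReal.div_ne_top hfin two_ne_zero)).1 ?_
    calc m / 2 + m / 2 = (∫⁻ ω in A, X ω ∂μ) + ∫⁻ ω in Aᶜ, X ω ∂μ := by
          rw [ENNReal.add_halves, lintegral_add_compl X hA]
      _ ≤ (∫⁻ ω in A, X ω ∂μ) + m / 2 := by gcongr
  calc m ^ 2 = 4 * (m / 2) ^ 2 := by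
        nth_rw 1 [← ENNReal.mul_div_cancel (a := 2) (b := m) two_ne_zero ofNat_ne_top]
        ring
    _ ≤ 4 * ((∫⁻ ω, X ω ^ 2 ∂μ) * μ A) := by
        gcongr
        exact (pow_le_pow_left' hhalf 2).trans (sq_setLIntegral_le hX.aemeasurable hA)
    _ = 4 * (∫⁻ ω, X ω ^ 2 ∂μ) * μ A := (mul_assoc _ _ _).symm

end Moments

/-! ### Counting retained words -/

section RetainedCount

variable {d M : ℕ}

open scoped Classical in
/-- The number of retained words in `T`. -/
def retainedCount (T : Finset (List (Alpha d M))) (ω : PercSpace d M) : ℕ :=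
  (T.filter (Retained d M ω)).card

lemma coe_retainedCount (T : Finset (List (Alpha d M))) (ω : PercSpace d M) :
    (retainedCount T ω : ℝ≥0∞) = ∑ w ∈ T, {ω | Retained d M ω w}.indicator 1 ω := by
  classical
  simp only [retainedCount, Finset.card_filter, indicator_apply, mem_ofPred_eq, Pi.one_apply]
  push_cast
  rfl

lemma measurable_retainedCount (T : Finset (List (Alpha d M))) :
    Measurable fun ω => (retainedCount T ω : ℝ≥0∞) := by
  simp_rw [coe_retainedCount]
  exact Finset.measurable_sum _ fun w _ => measurable_one.indicator (measurableSet_retained w)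

/-- The words of length `m` whose prefix of length `k` lies in `S`. -/
def descendants (k m : ℕ) (S : Finset (List (Alpha d M))) : Finset (List (Alpha d M)) :=
  (words d M m).filter fun w => w.take k ∈ S

@[simp]
lemma mem_descendants {k m : ℕ} {S : Finset (List (Alpha d M))} {w : List (Alpha d M)} :
    w ∈ descendants k m S ↔ w.length = m ∧ w.take k ∈ S := by
  simp [descendants]

lemma descendants_subset (k m : ℕ) (S : Finset (List (Alpha d M))) :
    descendants k m S ⊆ words d M m :=
  Finset.filter_subset _ _

lemma card_filter_take_eq_le (m j : ℕ) (u : List (Alpha d M)) :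
    ((words d M m).filter fun w => w.take j = u).card ≤ (M ^ d) ^ (m - j) := by
  rw [← card_words]
  refine Finset.card_le_card_of_injOn (fun w => w.drop j) ?_ ?_
  · intro w hw
    simp only [Finset.coe_filter, mem_words, mem_ofPred_eq] at hw
    simp [hw.1]
  · intro w hw w' hw' h
    simp only [Finset.coe_filter, mem_ofPred_eq] at hw hw' h
    rw [← List.take_append_drop j w, ← List.take_append_drop j w', h, hw.2, hw'.2]

lemma card_filter_descendants_le {k j : ℕ} (hj : j ≤ k) (r : ℕ) (S : Finset (List (Alpha d M)))
    (u : List (Alpha d M)) :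
    ((descendants k (k + r) S).filter fun w => w.take j = u).card ≤
      (S.filter fun s => s.take j = u).card * (M ^ d) ^ r := by
  rw [← card_words, ← Finset.card_product]
  refine Finset.card_le_card_of_injOn (fun w => (w.take k, w.drop k)) ?_ ?_
  · intro w hw
    simp only [Finset.coe_filter, mem_descendants, mem_ofPred_eq] at hw
    simp [hw.1.1, hw.1.2, List.take_take, min_eq_left hj, hw.2]
  · intro w _ w' _ h
    obtain ⟨htake, hdrop⟩ := Prod.mk.inj h
    rw [← List.take_append_drop k w, ← List.take_append_drop k w', htake, hdrop]

/-- Every word of length `j ≤ k` is a prefix of at most `B * Y ^ (k - j)` words of `S`; for a set of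
level-`k` cubes this is a uniform bound on branching, with growth factor `Y`. -/
def HasBranchingBound (S : Finset (List (Alpha d M))) (k : ℕ) (B Y : ℝ) : Prop :=
  ∀ j ≤ k, ∀ u : List (Alpha d M), ((S.filter fun s => s.take j = u).card : ℝ) ≤ B * Y ^ (k - j)

lemma sum_branchWeight_eq {p : ℝ} (hp : 0 ≤ p) {T : Finset (List (Alpha d M))} {m : ℕ}
    (hT : T ⊆ words d M m) (v : List (Alpha d M)) :
    ∑ w ∈ T, branchWeight (ENNReal.ofReal p) v w = ENNReal.ofReal (∑ j ∈ Finset.range (m + 1),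
      (T.filter fun w => w.take j = v.take j).card * p ^ (m - j)) := by
  have hlen : ∀ w ∈ T, branchWeight (ENNReal.ofReal p) v w = ∑ j ∈ Finset.range (m + 1),
      if w.take j = v.take j then ENNReal.ofReal p ^ (m - j) else 0 := fun w hw => by
    rw [branchWeight, mem_words.1 (hT hw)]
  rw [Finset.sum_congr rfl hlen, Finset.sum_comm,
    ENNReal.ofReal_sum_of_nonneg fun _ _ => by positivity]
  refine Finset.sum_congr rfl fun j _ => ?_
  rw [← Finset.sum_filter, Finset.sum_const, nsmul_eq_mul, ENNReal.ofReal_mul (by positivity),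
    ENNReal.ofReal_pow hp, ENNReal.ofReal_natCast]

variable (d M) in
/-- The mean number `M ^ d * p` of retained subcubes of a retained cube. -/
def meanOffspring (p : ℝ) : ℝ := (M : ℝ) ^ d * p

lemma geom_sum_range_le {x : ℝ} (hx : 1 < x) (n : ℕ) :
    ∑ i ∈ Finset.range n, x ^ i ≤ x ^ n / (x - 1) := by
  rw [geom_sum_eq hx.ne']
  have : 0 < x - 1 := sub_pos.2 hx
  gcongr
  linarith

/-- The constant in the moment bounds of `lintegral_retainedCount_descendants_pow_le`. -/
def momentConst (B X l : ℝ) : ℝ := B * (X / (X - 1)) + 1 / (l - 1)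

lemma momentConst_pos {B X l : ℝ} (hB : 0 ≤ B) (hX : 1 < X) (hl : 1 < l) :
    0 < momentConst B X l := by
  have _ : 0 < X - 1 := sub_pos.2 hX
  have _ : 0 < l - 1 := sub_pos.2 hl
  unfold momentConst
  positivity

variable {p : ℝ}

lemma sum_card_take_eq_le_of_hasBranchingBound (hp : 0 ≤ p) {S : Finset (List (Alpha d M))}
    {k : ℕ} {B Y X : ℝ} (hB : 0 ≤ B) (hY : 0 ≤ Y) (hS : HasBranchingBound S k B Y) (hX : 1 < X)
    (hYX : p * Y ≤ X) (r : ℕ) (v : List (Alpha d M)) :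
    ∑ j ∈ Finset.range (k + 1), (((descendants k (k + r) S).filter
        fun w => w.take j = v.take j).card : ℝ) * p ^ (k + r - j) ≤
      B * (X / (X - 1)) * (meanOffspring d M p ^ r * X ^ k) := by
  set l := meanOffspring d M p with hl
  have hl0 : 0 ≤ l := by rw [hl, meanOffspring]; positivity
  have hterm : ∀ j ∈ Finset.range (k + 1), (((descendants k (k + r) S).filter
      fun w => w.take j = v.take j).card : ℝ) * p ^ (k + r - j) ≤ B * l ^ r * X ^ (k - j) := by
    intro j hj
    have hjk : j ≤ k := Nat.lt_succ_iff.1 (Finset.mem_range.1 hj)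
    calc _ ≤ ((S.filter fun s => s.take j = v.take j).card : ℝ) * ((M : ℝ) ^ d) ^ r *
            p ^ (k + r - j) := by
          gcongr
          exact_mod_cast card_filter_descendants_le hjk r S (v.take j)
      _ ≤ B * Y ^ (k - j) * ((M : ℝ) ^ d) ^ r * (p ^ (k - j) * p ^ r) := by
          rw [← pow_add, ← Nat.sub_add_comm hjk]
          gcongr
          exact hS j hjk _
      _ = B * l ^ r * (p * Y) ^ (k - j) := by rw [hl, meanOffspring, mul_pow, mul_pow]; ring
      _ ≤ B * l ^ r * X ^ (k - j) := by gcongr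
  calc _ ≤ ∑ j ∈ Finset.range (k + 1), B * l ^ r * X ^ (k - j) := Finset.sum_le_sum hterm
    _ = B * l ^ r * ∑ j ∈ Finset.range (k + 1), X ^ j := by
        rw [← Finset.mul_sum, ← Finset.sum_range_reflect (fun j => X ^ j)]
        rfl
    _ ≤ B * l ^ r * (X ^ (k + 1) / (X - 1)) := by gcongr; exact geom_sum_range_le hX _
    _ = B * (X / (X - 1)) * (l ^ r * X ^ k) := by ring

lemma sum_card_take_eq_le_of_subset_words (hp : 0 ≤ p) (hl : 1 < meanOffspring d M p) {k r : ℕ}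
    {T : Finset (List (Alpha d M))} (hT : T ⊆ words d M (k + r)) (v : List (Alpha d M)) :
    ∑ i ∈ Finset.range r, ((T.filter fun w => w.take (k + 1 + i) = v.take (k + 1 + i)).card : ℝ) *
      p ^ (k + r - (k + 1 + i)) ≤ 1 / (meanOffspring d M p - 1) * meanOffspring d M p ^ r := by
  set l := meanOffspring d M p with hldef
  have hterm : ∀ i ∈ Finset.range r,
      ((T.filter fun w => w.take (k + 1 + i) = v.take (k + 1 + i)).card : ℝ) *
        p ^ (k + r - (k + 1 + i)) ≤ l ^ (r - 1 - i) := by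
    intro i _
    rw [show r - 1 - i = k + r - (k + 1 + i) by lia, hldef, meanOffspring, mul_pow]
    gcongr
    exact_mod_cast (Finset.card_le_card (Finset.filter_subset_filter _ hT)).trans
      (card_filter_take_eq_le _ _ _)
  calc _ ≤ ∑ i ∈ Finset.range r, l ^ (r - 1 - i) := Finset.sum_le_sum hterm
    _ = ∑ i ∈ Finset.range r, l ^ i := Finset.sum_range_reflect (fun i => l ^ i) r
    _ ≤ l ^ r / (l - 1) := geom_sum_range_le hl r
    _ = 1 / (l - 1) * l ^ r := by ring

lemma sum_branchWeight_descendants_le (hp : 0 ≤ p) (hl : 1 < meanOffspring d M p)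
    {S : Finset (List (Alpha d M))} {k : ℕ} {B Y X : ℝ} (hB : 0 ≤ B) (hY : 0 ≤ Y)
    (hS : HasBranchingBound S k B Y) (hX : 1 < X) (hYX : p * Y ≤ X) (r : ℕ)
    (v : List (Alpha d M)) :
    ∑ w ∈ descendants k (k + r) S, branchWeight (ENNReal.ofReal p) v w ≤
      ENNReal.ofReal (momentConst B X (meanOffspring d M p) *
        (meanOffspring d M p ^ r * X ^ k)) := by
  rw [sum_branchWeight_eq hp (descendants_subset _ _ _)]
  refine ENNReal.ofReal_le_ofReal ?_
  rw [show k + r + 1 = k + 1 + r by ring, Finset.sum_range_add, momentConst, add_mul]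
  refine add_le_add (sum_card_take_eq_le_of_hasBranchingBound hp hB hY hS hX hYX r v)
    ((sum_card_take_eq_le_of_subset_words hp hl (descendants_subset _ _ _) v).trans ?_)
  have : 0 < meanOffspring d M p - 1 := sub_pos.2 hl
  have : 0 < meanOffspring d M p ^ r := pow_pos (by linarith) r
  gcongr
  exact le_mul_of_one_le_right this.le (one_le_pow₀ hX.le)

variable {P : Measure (PercSpace d M)}

lemma lintegral_retainedCount_pow_le (hp1 : p ≤ 1) (hP : IsBernoulliPerc d M p P)
    {T : Finset (List (Alpha d M))} {m : ℕ} (hT : T ⊆ words d M m) {D : ℝ≥0∞}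
    (hD : ∀ v ∈ T, ∑ w ∈ T, branchWeight (ENNReal.ofReal p) v w ≤ D) (n : ℕ) :
    ∫⁻ ω, (retainedCount T ω : ℝ≥0∞) ^ n ∂P ≤ n.factorial * D ^ n := by
  have := hP.1
  simp_rw [coe_retainedCount]
  refine lintegral_sum_indicator_pow_le measurableSet_retained (fun S hS => ?_) n
  have hmean : ∑ w ∈ T, ENNReal.ofReal p ^ w.length ≤ D := by
    rcases T.eq_empty_or_nonempty with rfl | ⟨v, hv⟩
    · simp
    refine (Finset.sum_le_sum fun w _ => ?_).trans (hD v hv)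
    refine le_of_eq_of_le (by simp) <| Finset.single_le_sum
      (f := fun j => if w.take j = v.take j then ENNReal.ofReal p ^ (w.length - j) else 0)
      (fun _ _ => zero_le) (Finset.mem_range.2 w.length.succ_pos)
  have hweight : ∑ w ∈ T, ∑ v ∈ S, branchWeight (ENNReal.ofReal p) v w ≤ S.card * D := by
    rw [Finset.sum_comm, ← nsmul_eq_mul]
    exact Finset.sum_le_card_nsmul _ _ _ fun v hv => hD v (hS hv)
  calc ∑ w ∈ T, P {ω | ∀ v ∈ insert w S, ω ∈ {ω | Retained d M ω v}}
      ≤ ∑ w ∈ T, P {ω | ∀ v ∈ S, Retained d M ω v} *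
          (ENNReal.ofReal p ^ w.length + ∑ v ∈ S, branchWeight (ENNReal.ofReal p) v w) :=
        Finset.sum_le_sum fun w _ => measure_forall_retained_insert_le hp1 hP S w
    _ ≤ P {ω | ∀ v ∈ S, Retained d M ω v} * (D + S.card * D) := by
        rw [← Finset.mul_sum, Finset.sum_add_distrib]
        gcongr
    _ = (S.card + 1) * D * P {ω | ∀ v ∈ S, ω ∈ {ω | Retained d M ω v}} := by
        simp only [mem_ofPred_eq]
        ring

lemma lintegral_retainedCount_descendants_pow_le (hp : 0 ≤ p) (hp1 : p ≤ 1)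
    (hl : 1 < meanOffspring d M p) (hP : IsBernoulliPerc d M p P)
    {S : Finset (List (Alpha d M))} {k : ℕ} {B Y X : ℝ} (hB : 0 ≤ B) (hY : 0 ≤ Y)
    (hS : HasBranchingBound S k B Y) (hX : 1 < X) (hYX : p * Y ≤ X) (r n : ℕ) :
    ∫⁻ ω, (retainedCount (descendants k (k + r) S) ω : ℝ≥0∞) ^ n ∂P ≤
      ENNReal.ofReal (n.factorial * (momentConst B X (meanOffspring d M p) *
        (meanOffspring d M p ^ r * X ^ k)) ^ n) := by
  have := momentConst_pos hB hX hl
  rw [ENNReal.ofReal_mul (by positivity), ENNReal.ofReal_natCast,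
    ENNReal.ofReal_pow (by positivity)]
  exact lintegral_retainedCount_pow_le hp1 hP (descendants_subset _ _ _)
    (fun v _ => sum_branchWeight_descendants_le hp hl hB hY hS hX hYX r v) n

lemma lintegral_retainedCount_words (hp : 0 ≤ p) (hP : IsBernoulliPerc d M p P) (m : ℕ) :
    ∫⁻ ω, (retainedCount (words d M m) ω : ℝ≥0∞) ∂P =
      ENNReal.ofReal (meanOffspring d M p ^ m) := by
  simp_rw [coe_retainedCount]
  rw [lintegral_finsetSum _ fun w _ => measurable_one.indicator (measurableSet_retained w),
    Finset.sum_congr rfl fun w hw => by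
      rw [lintegral_indicator_one (measurableSet_retained w), measure_retained hP,
        mem_words.1 hw],
    Finset.sum_const, card_words, nsmul_eq_mul, meanOffspring, mul_pow,
    ENNReal.ofReal_mul (by positivity), ENNReal.ofReal_pow hp]
  norm_cast

end RetainedCount

section CountEstimates

variable {d M : ℕ} {p : ℝ} {P : Measure (PercSpace d M)}

lemma measure_le_retainedCount_descendants_le (hp : 0 ≤ p) (hp1 : p ≤ 1)
    (hl : 1 < meanOffspring d M p) (hP : IsBernoulliPerc d M p P)
    {S : Finset (List (Alpha d M))} {k m : ℕ} (hkm : k ≤ m) {B Y X : ℝ} (hB : 0 ≤ B) (hY : 0 ≤ Y)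
    (hS : HasBranchingBound S k B Y) (hX : 1 < X) (hYX : p * Y ≤ X) {τ : ℝ} (hτ : 0 < τ) (n : ℕ) :
    P {ω | meanOffspring d M p ^ m / τ ^ k ≤ retainedCount (descendants k m S) ω} ≤
      ENNReal.ofReal (n.factorial * (momentConst B X (meanOffspring d M p) *
        (X * τ / meanOffspring d M p) ^ k) ^ n) := by
  obtain ⟨r, rfl⟩ := Nat.exists_eq_add_of_le hkm
  set l := meanOffspring d M p
  have : 0 < l := by linarith
  set t := l ^ (k + r) / τ ^ k with ht
  have ht0 : 0 < t := by positivity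
  set N : PercSpace d M → ℝ≥0∞ := fun ω => retainedCount (descendants k (k + r) S) ω
  calc P {ω | t ≤ retainedCount (descendants k (k + r) S) ω}
      ≤ P {ω | ENNReal.ofReal (t ^ n) ≤ N ω ^ n} := by
        refine measure_mono fun ω hω => ?_
        rw [mem_ofPred_eq, ENNReal.ofReal_pow ht0.le]
        exact pow_le_pow_left' (ENNReal.ofReal_le_natCast.2 hω) n
    _ ≤ (∫⁻ ω, N ω ^ n ∂P) / ENNReal.ofReal (t ^ n) :=
        meas_ge_le_lintegral_div ((measurable_retainedCount _).pow_const n).aemeasurable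
          (by simpa using pow_pos ht0 n) ENNReal.ofReal_ne_top
    _ ≤ ENNReal.ofReal (n.factorial * (momentConst B X l * (l ^ r * X ^ k)) ^ n) /
          ENNReal.ofReal (t ^ n) := by
        gcongr
        exact lintegral_retainedCount_descendants_pow_le hp hp1 hl hP hB hY hS hX hYX r n
    _ = ENNReal.ofReal (n.factorial * (momentConst B X l * (X * τ / l) ^ k) ^ n) := by
        rw [← ENNReal.ofReal_div_of_pos (by positivity), mul_div_assoc, ← div_pow, ht]
        congr 3
        rw [pow_add, div_pow, mul_pow]
        field_simp

lemma hasBranchingBound_words_zero : HasBranchingBound (words d M 0) 0 1 0 := by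
  intro j hj u
  obtain rfl := Nat.le_zero.1 hj
  simpa [card_words] using Finset.card_filter_le (words d M 0) fun s => s.take 0 = u

lemma descendants_zero_words (m : ℕ) : descendants 0 m (words d M 0) = words d M m := by
  ext w
  simp

lemma sq_le_measure_mul_momentConst (hp : 0 ≤ p) (hp1 : p ≤ 1) (hl : 1 < meanOffspring d M p)
    (hP : IsBernoulliPerc d M p P) (m : ℕ) :
    ENNReal.ofReal ((meanOffspring d M p ^ m) ^ 2) ≤
      P {ω | meanOffspring d M p ^ m / 2 ≤ retainedCount (words d M m) ω} *
        ENNReal.ofReal (8 * (momentConst 1 2 (meanOffspring d M p) *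
          meanOffspring d M p ^ m) ^ 2) := by
  have := hP.1
  set l := meanOffspring d M p
  have : 0 < l := by linarith
  set K := momentConst 1 2 l
  have hmean := lintegral_retainedCount_words hp hP m
  have hsq : ∫⁻ ω, (retainedCount (words d M m) ω : ℝ≥0∞) ^ 2 ∂P ≤
      ENNReal.ofReal (2 * (K * l ^ m) ^ 2) := by
    simpa [descendants_zero_words, K, l, one_lt_two] using
      lintegral_retainedCount_descendants_pow_le hp hp1 hl hP zero_le_one le_rfl
        hasBranchingBound_words_zero one_lt_two (by simp) m 2
  have hPZ := sq_lintegral_le_mul_measure_half_lintegral_le (μ := P)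
    (measurable_retainedCount (words d M m)) (by rw [hmean]; exact ENNReal.ofReal_ne_top)
  have hevent : {ω | ENNReal.ofReal (l ^ m) / 2 ≤ (retainedCount (words d M m) ω : ℝ≥0∞)} =
      {ω | l ^ m / 2 ≤ retainedCount (words d M m) ω} := by
    ext ω
    rw [mem_ofPred_eq, mem_ofPred_eq, ← ENNReal.ofReal_le_natCast,
      ENNReal.ofReal_div_of_pos two_pos, ENNReal.ofReal_ofNat]
  rw [hmean, hevent] at hPZ
  set A := {ω | l ^ m / 2 ≤ retainedCount (words d M m) ω}
  calc ENNReal.ofReal ((l ^ m) ^ 2)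
      ≤ 4 * ENNReal.ofReal (2 * (K * l ^ m) ^ 2) * P A := by
        rw [ENNReal.ofReal_pow (by positivity)]
        exact hPZ.trans (by gcongr)
    _ = P A * ENNReal.ofReal (8 * (K * l ^ m) ^ 2) := by
        rw [← ENNReal.ofReal_ofNat 4, ← ENNReal.ofReal_mul (by positivity), mul_comm]
        ring_nf

lemma exists_forall_le_measure_le_retainedCount_words (hp : 0 ≤ p) (hp1 : p ≤ 1)
    (hl : 1 < meanOffspring d M p) (hP : IsBernoulliPerc d M p P) :
    ∃ c > 0, ∀ m, c ≤ P {ω | meanOffspring d M p ^ m / 2 ≤ retainedCount (words d M m) ω} := by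
  set l := meanOffspring d M p
  have : 0 < l := by linarith
  set K := momentConst 1 2 l
  have hK : 0 < K := momentConst_pos zero_le_one one_lt_two hl
  refine ⟨ENNReal.ofReal (1 / (8 * K ^ 2)), ENNReal.ofReal_pos.2 (by positivity), fun m => ?_⟩
  have hdiv : 1 / (8 * K ^ 2) = (l ^ m) ^ 2 / (8 * (K * l ^ m) ^ 2) := by
    field_simp
  rw [hdiv, ENNReal.ofReal_div_of_pos (by positivity)]
  exact ENNReal.div_le_of_le_mul (sq_le_measure_mul_momentConst hp hp1 hl hP m)

end CountEstimates

/-! ### Strips of cubes -/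

section Strips

variable {d M : ℕ}

variable (M) in
open scoped Classical in
/-- The words of the level-`k` cubes within `C * M ^ (-k)` of the hyperplane `a ⬝ᵥ x = b`, distances
being measured by the functional `a` at the lower-left corners. -/
def stripWords (a : Fin d → ℝ) (b C : ℝ) (k : ℕ) : Finset (List (Alpha d M)) :=
  (words d M k).filter fun w => |a ⬝ᵥ wordBase d M w - b| ≤ C / (M : ℝ) ^ k

lemma mem_stripWords {a : Fin d → ℝ} {b C : ℝ} {k : ℕ} {w : List (Alpha d M)} :
    w ∈ stripWords M a b C k ↔
      w.length = k ∧ |a ⬝ᵥ wordBase d M w - b| ≤ C / (M : ℝ) ^ k := by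
  simp [stripWords]

lemma card_le_of_forall_le_add {T : Finset ℕ} {D : ℕ} (h : ∀ x ∈ T, ∀ y ∈ T, x ≤ y + D) :
    T.card ≤ D + 1 := by
  rcases T.eq_empty_or_nonempty with rfl | hT
  · simp
  · have hsub : T ⊆ Finset.Icc (T.min' hT) (T.min' hT + D) := fun x hx =>
      Finset.mem_Icc.2 ⟨T.min'_le x hx, h x hx _ (T.min'_mem hT)⟩
    refine (Finset.card_le_card hsub).trans ?_
    rw [Nat.card_Icc]
    lia

lemma wordIndex_le_add_of_mem_stripWords (hM : M ≠ 0) {a : Fin d → ℝ} {b : ℝ} {C k : ℕ} {i : Fin d}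
    (hi : |a i| = 1) {w w' : List (Alpha d M)} (hw : w ∈ stripWords M a b C k)
    (hw' : w' ∈ stripWords M a b C k) (h : ∀ i' ≠ i, wordIndex i' w = wordIndex i' w') :
    wordIndex i w ≤ wordIndex i w' + 2 * C := by
  rw [mem_stripWords] at hw hw'
  have hMk : (0 : ℝ) < (M : ℝ) ^ k := by positivity
  have hbase : a ⬝ᵥ wordBase d M w - a ⬝ᵥ wordBase d M w' =
      a i * (wordIndex i w - wordIndex i w') / (M : ℝ) ^ k := by
    rw [dotProduct, dotProduct, ← Finset.sum_sub_distrib, Finset.sum_eq_single i]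
    · rw [wordBase_eq_wordIndex_div hM, wordBase_eq_wordIndex_div hM, hw.1, hw'.1]
      ring
    · intro i' _ hne
      rw [wordBase_eq_wordIndex_div hM, wordBase_eq_wordIndex_div hM, hw.1, hw'.1, h i' hne,
        sub_self]
    · simp
  have hdist : |a ⬝ᵥ wordBase d M w - a ⬝ᵥ wordBase d M w'| ≤ 2 * C / (M : ℝ) ^ k := by
    rw [two_mul, add_div]
    exact (abs_sub_le _ b _).trans (add_le_add hw.2 (by rw [abs_sub_comm]; exact hw'.2))
  rw [hbase, abs_div, abs_mul, hi, one_mul, abs_of_pos hMk,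
    div_le_div_iff_of_pos_right hMk] at hdist
  have hle := sub_le_iff_le_add'.1 ((le_abs_self _).trans hdist)
  exact_mod_cast hle

lemma card_le_of_subset_stripWords (hM : 1 < M) {a : Fin d → ℝ} {b : ℝ} {C k : ℕ} {i : Fin d}
    (hi : |a i| = 1) {T : Finset (List (Alpha d M))} (hT : T ⊆ stripWords M a b C k)
    (h : ∀ w ∈ T, ∀ w' ∈ T, ∀ i' ≠ i, wordIndex i' w = wordIndex i' w') :
    T.card ≤ 2 * C + 1 := by
  have hinj : Set.InjOn (wordIndex i) (T : Set (List (Alpha d M))) := by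
    intro w hw w' hw' hww'
    refine eq_of_wordIndex_eq hM ?_ fun i' => ?_
    · rw [(mem_stripWords.1 (hT hw)).1, (mem_stripWords.1 (hT hw')).1]
    · rcases eq_or_ne i' i with rfl | hi'
      exacts [hww', h w hw w' hw' i' hi']
  rw [← Finset.card_image_of_injOn hinj]
  refine card_le_of_forall_le_add ?_
  simp only [Finset.forall_mem_image]
  exact fun w hw w' hw' => wordIndex_le_add_of_mem_stripWords (by lia) hi (hT hw) (hT hw')
    (h w hw w' hw')

/-- In a strip, the coordinate with `|a i| = 1` is determined by the others up to `2 * C + 1`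
choices. -/
lemma hasBranchingBound_stripWords (hM : 1 < M) {a : Fin d → ℝ} (ha : ∃ i, |a i| = 1) (b : ℝ)
    (C k : ℕ) :
    HasBranchingBound (stripWords M a b C k) k (2 * C + 1) ((M : ℝ) ^ (d - 1)) := by
  classical
  obtain ⟨i, hi⟩ := ha
  intro j _ u
  set others : List (Alpha d M) → {i' : Fin d // i' ≠ i} → ℕ := fun w i' => wordIndex i' (w.drop j)
  set T := (stripWords M a b C k).filter fun w => w.take j = u
  have hT : ∀ {w}, w ∈ T → w ∈ stripWords M a b C k ∧ w.take j = u := by simp [T]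
  have hindex : ∀ {w w'}, w ∈ T → w' ∈ T → others w = others w' →
      ∀ i' ≠ i, wordIndex i' w = wordIndex i' w' := by
    intro w w' hw hw' h i' hi'
    have hlen := (mem_stripWords.1 (hT hw).1).1
    have hlen' := (mem_stripWords.1 (hT hw').1).1
    rw [← w.take_append_drop j, ← w'.take_append_drop j, wordIndex_append, wordIndex_append,
      (hT hw).2, (hT hw').2, List.length_drop, List.length_drop, hlen, hlen']
    exact congrArg _ (congrFun h ⟨i', hi'⟩)
  have hmaps : ∀ w ∈ T, others w ∈ Fintype.piFinset fun _ => Finset.range (M ^ (k - j)) := by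
    intro w hw
    refine Fintype.mem_piFinset.2 fun i' => Finset.mem_range.2 ?_
    have := wordIndex_lt hM i' (w.drop j)
    rwa [List.length_drop, (mem_stripWords.1 (hT hw).1).1] at this
  have hfiber : ∀ f ∈ Fintype.piFinset fun _ : {i' : Fin d // i' ≠ i} => Finset.range (M ^ (k - j)),
      (T.filter fun w => others w = f).card ≤ 2 * C + 1 := by
    intro f _
    refine card_le_of_subset_stripWords hM hi (fun w hw => (hT (Finset.mem_filter.1 hw).1).1) ?_
    intro w hw w' hw'
    rw [Finset.mem_filter] at hw hw'
    exact hindex hw.1 hw'.1 (hw.2.trans hw'.2.symm)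
  have hcard := Finset.card_le_mul_card_image_of_maps_to hmaps _ hfiber
  rw [Fintype.card_piFinset, Finset.prod_const, Finset.card_univ, Finset.card_range,
    Fintype.card_subtype_compl, Fintype.card_subtype_eq, Fintype.card_fin, ← pow_mul,
    mul_comm (k - j), pow_mul] at hcard
  exact_mod_cast hcard

end Strips

section StripFamily

variable {d M : ℕ}

lemma exists_abs_eq_one {a : Fin d → ℝ} (ha : ‖a‖ = 1) : ∃ i, |a i| = 1 := by
  rcases isEmpty_or_nonempty (Fin d) with hd | hd
  · simp [Subsingleton.elim a 0] at ha
  · obtain ⟨i, hi⟩ := (IsGreatest.pi_norm a).1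
    exact ⟨i, hi.trans ha⟩

lemma abs_dotProduct_le {a x : Fin d → ℝ} {r s : ℝ} (hr : 0 ≤ r) (ha : ∀ i, |a i| ≤ r)
    (hx : ∀ i, |x i| ≤ s) : |a ⬝ᵥ x| ≤ d * (r * s) := by
  calc |a ⬝ᵥ x| ≤ ∑ i, |a i * x i| := Finset.abs_sum_le_sum_abs _ _
    _ ≤ ∑ _i : Fin d, r * s := Finset.sum_le_sum fun i _ => by
        rw [abs_mul]
        gcongr
        exacts [ha i, hx i]
    _ = d * (r * s) := by simp

lemma stripWords_subset_stripWords (hM : 1 < M) {a a' : Fin d → ℝ} {b b' : ℝ} {k : ℕ}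
    (ha : ∀ i, |a' i - a i| ≤ 1 / (M : ℝ) ^ k) (hb : |b' - b| ≤ 1 / (M : ℝ) ^ k) (C : ℝ) :
    stripWords M a b C k ⊆ stripWords M a' b' (C + d + 1) k := by
  intro w hw
  rw [mem_stripWords] at hw ⊢
  refine ⟨hw.1, ?_⟩
  have hbase : ∀ i, |wordBase d M w i| ≤ 1 := fun i => by
    have hpos : (0 : ℝ) ≤ ((M : ℝ) ^ w.length)⁻¹ := by positivity
    rw [abs_of_nonneg (wordBase_nonneg (by lia) w i)]
    linarith [wordBase_add_le_one hM w i]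
  have hdot : |(a' - a) ⬝ᵥ wordBase d M w| ≤ d * (1 / (M : ℝ) ^ k * 1) :=
    abs_dotProduct_le (by positivity) ha hbase
  calc |a' ⬝ᵥ wordBase d M w - b'|
      = |(a ⬝ᵥ wordBase d M w - b) + (a' - a) ⬝ᵥ wordBase d M w - (b' - b)| := by
        rw [sub_dotProduct]
        ring_nf
    _ ≤ |a ⬝ᵥ wordBase d M w - b| + |(a' - a) ⬝ᵥ wordBase d M w| + |b' - b| :=
        (abs_sub _ _).trans (add_le_add_left (abs_add_le _ _) _)
    _ ≤ C / (M : ℝ) ^ k + d * (1 / (M : ℝ) ^ k * 1) + 1 / (M : ℝ) ^ k := by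
        gcongr
        exact hw.2
    _ = (C + d + 1) / (M : ℝ) ^ k := by ring

lemma abs_floor_mul_div_sub_le {N : ℝ} (hN : 0 < N) (x : ℝ) : |⌊x * N⌋ / N - x| ≤ 1 / N := by
  rw [div_sub' hN.ne', abs_div, abs_of_pos hN, mul_comm N, div_le_div_iff_of_pos_right hN,
    abs_sub_comm, Int.self_sub_floor, abs_of_nonneg (Int.fract_nonneg _)]
  exact (Int.fract_lt_one _).le

lemma floor_mul_mem_Icc {x : ℝ} {c : ℕ} (hx : |x| ≤ c) (N : ℕ) :
    ⌊x * N⌋ ∈ Finset.Icc (-(c * N : ℤ)) (c * N) := by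
  obtain ⟨hlo, hhi⟩ := abs_le.1 hx
  rw [Finset.mem_Icc, Int.le_floor]
  constructor
  · push_cast
    nlinarith [N.cast_nonneg (α := ℝ)]
  · refine Int.floor_le_iff.2 ?_
    push_cast
    nlinarith [N.cast_nonneg (α := ℝ)]

open scoped Classical in
/-- A finite set of hyperplanes `n ⬝ᵥ x = c * N`, in units of `1 / N`: coefficients `n i / N` in
`[-1, 1]`, one of them equal to `1` or `-1`, and offset `c / N` in `[-d, d]`. -/
def hyperplaneNet (d N : ℕ) : Finset ((Fin d → ℤ) × ℤ) :=
  ((Fintype.piFinset fun _ => Finset.Icc (-((1 : ℕ) * N : ℤ)) ((1 : ℕ) * N)).filter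
    fun n : Fin d → ℤ => ∃ i, |n i| = N) ×ˢ Finset.Icc (-(d * N : ℤ)) (d * N)

lemma card_hyperplaneNet_le (d : ℕ) {N : ℕ} (hN : 0 < N) :
    (hyperplaneNet d N).card ≤ (3 * N) ^ d * ((2 * d + 1) * N) := by
  rw [hyperplaneNet, Finset.card_product, Int.card_Icc]
  refine Nat.mul_le_mul ((Finset.card_filter_le _ _).trans ?_) ?_
  · rw [Fintype.card_piFinset_const, Int.card_Icc, Nat.cast_one, one_mul]
    exact Nat.pow_le_pow_left (by lia) _
  · rw [Int.toNat_le]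
    push_cast
    nlinarith

lemma floor_mem_hyperplaneNet {a : Fin d → ℝ} (ha : ‖a‖ = 1) {b : ℝ} (hb : |b| ≤ d) (N : ℕ) :
    (fun i => ⌊a i * N⌋, ⌊b * N⌋) ∈ hyperplaneNet d N := by
  refine Finset.mem_product.2 ⟨Finset.mem_filter.2 ⟨Fintype.mem_piFinset.2 fun i =>
    floor_mul_mem_Icc ?_ _, ?_⟩, floor_mul_mem_Icc hb _⟩
  · simpa [ha] using norm_le_pi_norm a i
  · obtain ⟨i, hi⟩ := exists_abs_eq_one ha
    refine ⟨i, ?_⟩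
    rcases eq_or_eq_neg_of_abs_eq hi with h | h
    · simp [h]
    · simp [h, show -(N : ℝ) = ((-N : ℤ) : ℝ) by push_cast; rfl, -Int.cast_neg]

/-- Rounding the coefficients down to multiples of `M ^ (-k)` keeps one of them equal to `1` or
`-1`. -/
lemma exists_stripFamily (hM : 1 < M) (C k : ℕ) :
    ∃ 𝓕 : Finset (Finset (List (Alpha d M))),
      (𝓕.card : ℝ) ≤ 3 ^ d * (2 * d + 1) * ((M : ℝ) ^ (d + 1)) ^ k ∧
      (∀ S ∈ 𝓕, HasBranchingBound S k (2 * (C + d + 1) + 1) ((M : ℝ) ^ (d - 1))) ∧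
      ∀ a : Fin d → ℝ, ‖a‖ = 1 → ∀ b : ℝ, |b| ≤ d → ∃ S ∈ 𝓕, stripWords M a b C k ⊆ S := by
  classical
  have hMk : 0 < M ^ k := by positivity
  set strip : (Fin d → ℤ) × ℤ → Finset (List (Alpha d M)) := fun q =>
    stripWords M (fun i => q.1 i / (M : ℝ) ^ k) (q.2 / (M : ℝ) ^ k) (C + d + 1) k
  refine ⟨(hyperplaneNet d (M ^ k)).image strip, ?_, ?_, fun a ha b hb => ?_⟩
  · calc (((hyperplaneNet d (M ^ k)).image strip).card : ℝ)
        ≤ (((3 * M ^ k) ^ d * ((2 * d + 1) * M ^ k) : ℕ) : ℝ) :=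
          Nat.cast_le.2 (Finset.card_image_le.trans (card_hyperplaneNet_le d hMk))
      _ = 3 ^ d * (2 * d + 1) * ((M : ℝ) ^ (d + 1)) ^ k := by
        push_cast
        ring
  · simp only [Finset.forall_mem_image]
    intro q hq
    obtain ⟨i, hi⟩ := (Finset.mem_filter.1 (Finset.mem_product.1 hq).1).2
    have hone : |(q.1 i / (M : ℝ) ^ k : ℝ)| = 1 := by
      have : (0 : ℝ) < (M : ℝ) ^ k := by positivity
      rw [abs_div, abs_of_pos this, div_eq_one_iff_eq this.ne']
      exact_mod_cast hi
    have hbound := hasBranchingBound_stripWords hM (a := fun i => q.1 i / (M : ℝ) ^ k) ⟨i, hone⟩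
      (q.2 / (M : ℝ) ^ k) (C + d + 1) k
    push_cast at hbound
    exact hbound
  · have hcast : ((M ^ k : ℕ) : ℝ) = (M : ℝ) ^ k := Nat.cast_pow M k
    have hround : ∀ x : ℝ, |⌊x * (M ^ k : ℕ)⌋ / (M : ℝ) ^ k - x| ≤ 1 / (M : ℝ) ^ k := fun x => by
      rw [← hcast]
      exact abs_floor_mul_div_sub_le (Nat.cast_pos.2 hMk) x
    exact ⟨_, Finset.mem_image_of_mem strip (floor_mem_hyperplaneNet ha hb (M ^ k)),
      stripWords_subset_stripWords hM (fun i => hround (a i)) (hround b) C⟩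

end StripFamily

/-! ### Coverings by balls of geometric radii -/

section Covering

variable {θ t : ℝ}

lemma exists_le_pow_lt_and_rpow_pow_le (hθ : 0 < θ) (hθ1 : θ < 1) (ht : 0 < t)
    {x e : ℝ≥0∞} {n₀ : ℕ} (hx : x < ENNReal.ofReal (θ ^ n₀)) (he : 0 < e) :
    ∃ k, n₀ ≤ k ∧ x < ENNReal.ofReal (θ ^ k) ∧
      ENNReal.ofReal ((θ ^ t) ^ k) ≤ ENNReal.ofReal (θ ^ t)⁻¹ * (x ^ t + e) := by
  have hxtop : x ≠ ∞ := (hx.trans_le le_top).ne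
  have hclose : ∀ᶠ y in nhds x, y ^ t < x ^ t + e :=
    (ENNReal.continuous_rpow_const.tendsto x).eventually_lt_const
      (ENNReal.lt_add_right (ENNReal.rpow_ne_top_of_nonneg ht.le hxtop) he.ne')
  have : (nhdsWithin x (Ioi x)).NeBot := nhdsGT_neBot_of_exists_gt ⟨_, hx⟩
  obtain ⟨y, ⟨hyt, hyθ⟩, hxy⟩ := ((hclose.and (eventually_lt_nhds hx)).filter_mono
    (nhdsWithin_le_nhds (s := Ioi x))).and self_mem_nhdsWithin |>.exists
  have hytop : y ≠ ∞ := (hyθ.trans_le le_top).ne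
  have hy0 : 0 < y.toReal := ENNReal.toReal_pos (pos_of_gt hxy).ne' hytop
  have hyθ' : y.toReal < θ ^ n₀ := (ENNReal.lt_ofReal_iff_toReal_lt hytop).1 hyθ
  obtain ⟨k, hk, hk'⟩ := exists_nat_pow_near_of_lt_one hy0
    (hyθ'.le.trans (pow_le_one₀ hθ.le hθ1.le)) hθ hθ1
  refine ⟨k, Nat.lt_succ_iff.1 ((pow_lt_pow_iff_right_of_lt_one₀ hθ hθ1).1 (hk.trans hyθ')),
    hxy.trans_le (ENNReal.le_ofReal_iff_toReal_le hytop (by positivity) |>.2 hk'), ?_⟩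
  have hle : (θ ^ t) ^ (k + 1) ≤ y.toReal ^ t := by
    rw [Real.rpow_pow_comm hθ.le]
    exact Real.rpow_le_rpow (by positivity) hk.le ht.le
  calc ENNReal.ofReal ((θ ^ t) ^ k)
      = ENNReal.ofReal (θ ^ t)⁻¹ * ENNReal.ofReal ((θ ^ t) ^ (k + 1)) := by
        rw [← ENNReal.ofReal_mul (by positivity), pow_succ']
        field_simp
    _ ≤ ENNReal.ofReal (θ ^ t)⁻¹ * ENNReal.ofReal (y.toReal ^ t) := by gcongr
    _ = ENNReal.ofReal (θ ^ t)⁻¹ * y ^ t := by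
        rw [← ENNReal.ofReal_rpow_of_pos hy0, ENNReal.ofReal_toReal hytop]
    _ ≤ ENNReal.ofReal (θ ^ t)⁻¹ * (x ^ t + e) := by gcongr

variable {X : Type*} [MetricSpace X] [MeasurableSpace X] [BorelSpace X]

lemma exists_iUnion_superset_ediam_rpow_lt (ht : 0 < t) {s : Set X} (hs : μH[t] s = 0) {r δ : ℝ≥0∞}
    (hr : 0 < r) (hδ : 0 < δ) :
    ∃ U : ℕ → Set X, s ⊆ ⋃ i, U i ∧ (∀ i, Metric.ediam (U i) ≤ r) ∧
      ∑' i, Metric.ediam (U i) ^ t < δ := by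
  rw [Measure.hausdorffMeasure_apply] at hs
  have hlt := ((iSup_le_iff.1 ((iSup_le_iff.1 hs.le) r)) hr).trans_lt hδ
  simp only [iInf_lt_iff] at hlt
  obtain ⟨U, hU, hdiam, hsum⟩ := hlt
  refine ⟨U, hU, hdiam, lt_of_eq_of_lt (tsum_congr fun i => ?_) hsum⟩
  rcases (U i).eq_empty_or_nonempty with h | h <;> simp [h, ht]

lemma exists_cover_ball_pow_of_hausdorffMeasure_eq_zero (hθ : 0 < θ) (hθ1 : θ < 1) (ht : 0 < t)
    {s : Set X} (hs : μH[t] s = 0) (hne : s.Nonempty) (n₀ : ℕ) {ε : ℝ≥0∞} (hε : 0 < ε) :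
    ∃ (c : ℕ → X) (k : ℕ → ℕ), (∀ i, c i ∈ s) ∧ (∀ i, n₀ ≤ k i) ∧
      s ⊆ ⋃ i, Metric.ball (c i) (θ ^ k i) ∧ ∑' i, ENNReal.ofReal ((θ ^ t) ^ k i) < ε := by
  set D := ENNReal.ofReal (θ ^ t)⁻¹
  have hδ : 0 < ε / D / 2 := ENNReal.half_pos (ENNReal.div_pos hε.ne' ENNReal.ofReal_ne_top).ne'
  obtain ⟨U, hU, hdiam, hsum⟩ := exists_iUnion_superset_ediam_rpow_lt ht hs
    (ENNReal.ofReal_pos.2 (pow_pos hθ (n₀ + 1))) hδ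
  obtain ⟨e, he, hesum⟩ := ENNReal.exists_pos_sum_of_countable' hδ.ne' ℕ
  have hscale : ENNReal.ofReal (θ ^ (n₀ + 1)) < ENNReal.ofReal (θ ^ n₀) :=
    (ENNReal.ofReal_lt_ofReal_iff (by positivity)).2 (pow_lt_pow_right_of_lt_one₀ hθ hθ1 (by lia))
  choose k hk hkdiam hkpow using fun i =>
    exists_le_pow_lt_and_rpow_pow_le hθ hθ1 ht ((hdiam i).trans_lt hscale) (he i)
  have hcenter : ∀ i, ∃ x ∈ s, (s ∩ U i).Nonempty → x ∈ U i := fun i => by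
    by_cases h : (s ∩ U i).Nonempty
    · exact ⟨h.choose, h.choose_spec.1, fun _ => h.choose_spec.2⟩
    · exact ⟨hne.choose, hne.choose_spec, fun h' => absurd h' h⟩
  choose c hcs hcU using hcenter
  refine ⟨c, k, hcs, hk, fun x hx => ?_, ?_⟩
  · obtain ⟨i, hi⟩ := mem_iUnion.1 (hU hx)
    refine mem_iUnion.2 ⟨i, Metric.mem_ball.2 ?_⟩
    have hdist := (Metric.edist_le_ediam_of_mem hi (hcU i ⟨x, hx, hi⟩)).trans_lt (hkdiam i)
    rwa [edist_dist, ENNReal.ofReal_lt_ofReal_iff (by positivity)] at hdist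
  · calc ∑' i, ENNReal.ofReal ((θ ^ t) ^ k i)
        ≤ D * (∑' i, Metric.ediam (U i) ^ t + ∑' i, e i) := by
          rw [← ENNReal.tsum_add, ← ENNReal.tsum_mul_left]
          exact ENNReal.tsum_le_tsum hkpow
      _ < ε := ENNReal.mul_lt_of_lt_div' <|
          (ENNReal.add_lt_add hsum hesum).trans_eq (ENNReal.add_halves _)

end Covering

/-! ### Balanced realizations -/

section Balanced

variable {d M : ℕ} {p : ℝ} {P : Measure (PercSpace d M)}

/-- Some set of words in `𝓕` has at least `l ^ m / τ ^ k` retained descendants of length `m`. For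
sets of level-`k` cubes and `l` the mean offspring, this is a fraction `τ ^ (-k)` of the expected
number of retained level-`m` cubes. -/
def crowdedEvent (𝓕 : Finset (Finset (List (Alpha d M)))) (l τ : ℝ) (k m : ℕ) :
    Set (PercSpace d M) :=
  ⋃ S ∈ 𝓕, {ω | l ^ m / τ ^ k ≤ retainedCount (descendants k m S) ω}

/-- There are at least `l ^ m / 2` retained words of length `m`, and they are not concentrated on
the descendants of any member of the families `𝓕 k`, `n₀ ≤ k ≤ m`. -/
def balancedEvent (𝓕 : ℕ → Finset (Finset (List (Alpha d M)))) (l τ : ℝ) (n₀ m : ℕ) :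
    Set (PercSpace d M) :=
  {ω | l ^ m / 2 ≤ retainedCount (words d M m) ω} \
    ⋃ k ∈ Finset.Icc n₀ m, crowdedEvent (𝓕 k) l τ k m

lemma measurableSet_le_retainedCount (T : Finset (List (Alpha d M))) (x : ℝ) :
    MeasurableSet {ω | x ≤ retainedCount T ω} := by
  simpa only [ENNReal.ofReal_le_natCast] using
    measurableSet_le (measurable_const (a := ENNReal.ofReal x)) (measurable_retainedCount T)

lemma measurableSet_balancedEvent (𝓕 : ℕ → Finset (Finset (List (Alpha d M)))) (l τ : ℝ)
    (n₀ m : ℕ) : MeasurableSet (balancedEvent 𝓕 l τ n₀ m) :=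
  (measurableSet_le_retainedCount _ _).diff <| Finset.measurableSet_biUnion _ fun _ _ =>
    Finset.measurableSet_biUnion _ fun _ _ => measurableSet_le_retainedCount _ _

/-- High moments make the probability of crowding beat the exponential size of the families. -/
lemma exists_measure_crowdedEvent_le (hp : 0 ≤ p) (hp1 : p ≤ 1) (hl : 1 < meanOffspring d M p)
    (hP : IsBernoulliPerc d M p P) {𝓕 : ℕ → Finset (Finset (List (Alpha d M)))} {A D B Y τ : ℝ}
    (hA : 0 ≤ A) (hD : 0 < D) (hB : 0 ≤ B) (hY : 0 ≤ Y) (hτ : 0 < τ)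
    (hτl : τ < meanOffspring d M p) (hYτ : p * Y * τ < meanOffspring d M p)
    (h𝓕 : ∀ k, ((𝓕 k).card : ℝ) ≤ A * D ^ k) (hS : ∀ k, ∀ S ∈ 𝓕 k, HasBranchingBound S k B Y) :
    ∃ C q : ℝ, 0 ≤ q ∧ q < 1 ∧ ∀ k m, k ≤ m →
      P (crowdedEvent (𝓕 k) (meanOffspring d M p) τ k m) ≤ ENNReal.ofReal (C * q ^ k) := by
  set l := meanOffspring d M p
  have hl0 : 0 < l := by linarith
  obtain ⟨X, hX, hXl⟩ := exists_between (a₁ := max 1 (p * Y)) (a₂ := l / τ)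
    (max_lt ((one_lt_div hτ).2 hτl) ((lt_div_iff₀ hτ).2 hYτ))
  obtain ⟨hX1, hYX⟩ := max_lt_iff.1 hX
  set K := momentConst B X l
  have : 0 < K := momentConst_pos hB hX1 hl
  set ρ := X * τ / l
  have hρ : ρ < 1 := (div_lt_one hl0).2 ((lt_div_iff₀ hτ).1 hXl)
  have : 0 ≤ ρ := by positivity
  obtain ⟨n, hn⟩ := exists_pow_lt_of_lt_one (inv_pos.2 hD) hρ
  refine ⟨A * (n.factorial * K ^ n), D * ρ ^ n, by positivity, ?_, fun k m hkm => ?_⟩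
  · rwa [← lt_inv_mul_iff₀ hD, mul_one]
  calc P (crowdedEvent (𝓕 k) l τ k m)
      ≤ ∑ S ∈ 𝓕 k, P {ω | l ^ m / τ ^ k ≤ retainedCount (descendants k m S) ω} :=
        measure_biUnion_finset_le _ _
    _ ≤ (𝓕 k).card * ENNReal.ofReal (n.factorial * (K * ρ ^ k) ^ n) := by
        rw [← nsmul_eq_mul]
        exact Finset.sum_le_card_nsmul _ _ _ fun S hSk =>
          measure_le_retainedCount_descendants_le hp hp1 hl hP hkm hB hY (hS k S hSk) hX1 hYX.le
            hτ n
    _ ≤ ENNReal.ofReal (A * D ^ k * (n.factorial * (K * ρ ^ k) ^ n)) := by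
        rw [ENNReal.ofReal_mul (p := A * D ^ k) (by positivity), ← ENNReal.ofReal_natCast]
        exact mul_le_mul_left (ENNReal.ofReal_le_ofReal (h𝓕 k)) _
    _ = ENNReal.ofReal (A * (n.factorial * K ^ n) * (D * ρ ^ n) ^ k) := by
        congr 1
        ring

lemma exists_measure_biUnion_lt {Ω : Type*} [MeasurableSpace Ω] {μ : Measure Ω}
    {s : ℕ → ℕ → Set Ω} {C q : ℝ} (hq : 0 ≤ q) (hq1 : q < 1)
    (h : ∀ k m, k ≤ m → μ (s k m) ≤ ENNReal.ofReal (C * q ^ k)) {ε : ℝ≥0∞} (hε : 0 < ε) :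
    ∃ n₀, ∀ m, μ (⋃ k ∈ Finset.Icc n₀ m, s k m) < ε := by
  set f : ℕ → ℝ≥0∞ := fun k => ENNReal.ofReal (C * q ^ k)
  have hsum : ∑' k, f k ≠ ∞ :=
    ((summable_geometric_of_lt_one hq hq1).mul_left C).tsum_ofReal_ne_top
  obtain ⟨n₀, hn₀⟩ := ((ENNReal.tendsto_sum_nat_add f hsum).eventually_lt_const hε).exists
  refine ⟨n₀, fun m => lt_of_le_of_lt ?_ hn₀⟩
  calc μ (⋃ k ∈ Finset.Icc n₀ m, s k m)
      ≤ ∑ k ∈ Finset.Icc n₀ m, f k := (measure_biUnion_finset_le _ _).trans <|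
        Finset.sum_le_sum fun k hk => h k m (Finset.mem_Icc.1 hk).2
    _ ≤ ∑ k ∈ Finset.Ico n₀ (n₀ + (m + 1)), f k := Finset.sum_le_sum_of_subset fun k hk => by
        rw [Finset.mem_Icc] at hk
        exact Finset.mem_Ico.2 ⟨hk.1, by lia⟩
    _ = ∑ j ∈ Finset.range (m + 1), f (j + n₀) := by
        rw [Finset.sum_Ico_eq_sum_range]
        simp [add_comm]
    _ ≤ ∑' j, f (j + n₀) := ENNReal.sum_le_tsum _

lemma le_measure_frequently_mem {Ω : Type*} [MeasurableSpace Ω] {μ : Measure Ω} [IsFiniteMeasure μ]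
    {s : ℕ → Set Ω} (hs : ∀ n, MeasurableSet (s n)) {c : ℝ≥0∞} (h : ∀ n, c ≤ μ (s n)) :
    c ≤ μ {x | ∃ᶠ n in Filter.atTop, x ∈ s n} := by
  have hset : {x | ∃ᶠ n in Filter.atTop, x ∈ s n} = ⋂ n, ⋃ m ≥ n, s m := by
    ext x
    simp [Filter.frequently_atTop]
  rw [hset]
  refine ge_of_tendsto' (tendsto_measure_iInter_atTop (μ := μ) (fun n =>
    (MeasurableSet.biUnion (to_countable _) fun m _ => hs m).nullMeasurableSet)
    (fun a b hab => biUnion_subset_biUnion_left fun m hm => hab.trans hm)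
    ⟨0, measure_ne_top _ _⟩) fun n => (h n).trans (measure_mono ?_)
  exact subset_biUnion_of_mem (u := s) (le_refl n)

lemma exists_measure_frequently_balancedEvent_pos (hp : 0 ≤ p) (hp1 : p ≤ 1)
    (hl : 1 < meanOffspring d M p) (hP : IsBernoulliPerc d M p P)
    {𝓕 : ℕ → Finset (Finset (List (Alpha d M)))} {A D B Y τ : ℝ}
    (hA : 0 ≤ A) (hD : 0 < D) (hB : 0 ≤ B) (hY : 0 ≤ Y) (hτ : 0 < τ)
    (hτl : τ < meanOffspring d M p) (hYτ : p * Y * τ < meanOffspring d M p)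
    (h𝓕 : ∀ k, ((𝓕 k).card : ℝ) ≤ A * D ^ k) (hS : ∀ k, ∀ S ∈ 𝓕 k, HasBranchingBound S k B Y) :
    ∃ n₀, 0 < P {ω | ∃ᶠ m in Filter.atTop,
      ω ∈ balancedEvent 𝓕 (meanOffspring d M p) τ n₀ m} := by
  have := hP.1
  obtain ⟨c, hc, hrich⟩ := exists_forall_le_measure_le_retainedCount_words hp hp1 hl hP
  obtain ⟨C, q, hq, hq1, hcrowd⟩ :=
    exists_measure_crowdedEvent_le hp hp1 hl hP hA hD hB hY hτ hτl hYτ h𝓕 hS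
  have hctop : c ≠ ∞ := ((hrich 0).trans_lt (measure_lt_top _ _)).ne
  obtain ⟨n₀, hn₀⟩ := exists_measure_biUnion_lt hq hq1 hcrowd (ENNReal.half_pos hc.ne')
  refine ⟨n₀, (ENNReal.half_pos hc.ne').trans_le <|
    le_measure_frequently_mem (measurableSet_balancedEvent 𝓕 _ τ n₀) fun m => ?_⟩
  calc c / 2 = c - c / 2 := (ENNReal.sub_half hctop).symm
    _ ≤ _ := (tsub_le_tsub (hrich m) (hn₀ m).le).trans le_measure_sdiff

end Balanced

/-! ### Projections of balanced realizations -/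

section Projection

variable {d M : ℕ}

/-- The linear form `x ↦ a ⬝ᵥ x`, a scalar version of the orthogonal projection onto a line of
direction `a`. -/
def scalarProj (a : Fin d → ℝ) (x : EuclideanSpace ℝ (Fin d)) : ℝ := a ⬝ᵥ x.ofLp

lemma continuous_scalarProj (a : Fin d → ℝ) : Continuous (scalarProj a) :=
  continuous_const.dotProduct (PiLp.continuous_ofLp 2 _)

lemma abs_scalarProj_sub_le {a : Fin d → ℝ} (ha : ‖a‖ = 1) {w : List (Alpha d M)}
    {x : EuclideanSpace ℝ (Fin d)} (hx : x ∈ wordCube d M w) :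
    |scalarProj a x - a ⬝ᵥ wordBase d M w| ≤ d / (M : ℝ) ^ w.length := by
  have hcoord : ∀ i, |(x.ofLp - wordBase d M w) i| ≤ ((M : ℝ) ^ w.length)⁻¹ := fun i => by
    obtain ⟨hlo, hhi⟩ := mem_wordCube.1 hx i
    rw [Pi.sub_apply, abs_of_nonneg (sub_nonneg.2 hlo)]
    exact sub_le_iff_le_add'.2 hhi
  have h := abs_dotProduct_le zero_le_one (fun i => ha ▸ norm_le_pi_norm a i) hcoord
  rwa [dotProduct_sub, one_mul, ← div_eq_mul_inv] at h

lemma abs_scalarProj_le (hM : 1 < M) {a : Fin d → ℝ} (ha : ‖a‖ = 1) {ω : PercSpace d M}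
    {x : EuclideanSpace ℝ (Fin d)} (hx : x ∈ percLimit d M ω) : |scalarProj a x| ≤ d := by
  obtain ⟨w, hw, -, hxw⟩ := mem_approx.1 (percLimit_subset_approx (n := 0) hM ω hx)
  obtain rfl := List.length_eq_zero_iff.1 (mem_words.1 hw)
  have hbase : wordBase d M [] = 0 := funext fun _ => by simp [wordBase]
  simpa [hbase] using abs_scalarProj_sub_le ha hxw

lemma mem_stripWords_of_mem_wordCube {a : Fin d → ℝ} (ha : ‖a‖ = 1) {w : List (Alpha d M)}
    {x : EuclideanSpace ℝ (Fin d)} (hx : x ∈ wordCube d M w) {b : ℝ}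
    (hb : |scalarProj a x - b| ≤ 1 / (M : ℝ) ^ w.length) :
    w ∈ stripWords M a b (d + 1) w.length := by
  refine mem_stripWords.2 ⟨rfl, ?_⟩
  calc |a ⬝ᵥ wordBase d M w - b|
      ≤ |a ⬝ᵥ wordBase d M w - scalarProj a x| + |scalarProj a x - b| := abs_sub_le _ _ _
    _ ≤ d / (M : ℝ) ^ w.length + 1 / (M : ℝ) ^ w.length := by
        rw [abs_sub_comm]
        exact add_le_add (abs_scalarProj_sub_le ha hx) hb
    _ = (d + 1) / (M : ℝ) ^ w.length := by ring

lemma wordBase_mem_wordCube (w : List (Alpha d M)) :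
    WithLp.toLp 2 (wordBase d M w) ∈ wordCube d M w :=
  mem_wordCube.2 fun _ => ⟨le_rfl, le_add_of_nonneg_right (by positivity)⟩

lemma percLimit_eq_empty_iff (hM : 1 < M) {ω : PercSpace d M} :
    percLimit d M ω = ∅ ↔ ∃ n, ∀ w ∈ words d M n, ¬ Retained d M ω w := by
  refine ⟨fun h => ?_, fun ⟨n, hn⟩ => ?_⟩
  · obtain ⟨n, hn⟩ := exists_approx_subset_of_isOpen hM ω isOpen_empty h.subset
    exact ⟨n, fun w hw hr => hn (mem_approx.2 ⟨w, hw, hr, wordBase_mem_wordCube w⟩)⟩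
  · refine eq_empty_iff_forall_notMem.2 fun x hx => ?_
    obtain ⟨w, hw, hr, -⟩ := mem_approx.1 (percLimit_subset_approx (n := n) hM ω hx)
    exact hn w hw hr

lemma retainedCount_words_le_sum {ι : Type*} (hM : 1 < M) {a : Fin d → ℝ} (ha : ‖a‖ = 1)
    {ω : PercSpace d M} {m : ℕ} {I : Finset ι} {b : ι → ℝ} {k : ι → ℕ}
    {S : ι → Finset (List (Alpha d M))} (hk : ∀ i ∈ I, k i ≤ m)
    (hS : ∀ i ∈ I, stripWords M a (b i) (d + 1) (k i) ⊆ S i)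
    (hcover : approx d M ω m ⊆
      ⋃ i ∈ I, scalarProj a ⁻¹' Metric.ball (b i) ((M : ℝ)⁻¹ ^ k i)) :
    retainedCount (words d M m) ω ≤ ∑ i ∈ I, retainedCount (descendants (k i) m (S i)) ω := by
  classical
  refine (Finset.card_le_card fun w hw => ?_).trans Finset.card_biUnion_le
  obtain ⟨hwm, hret⟩ := Finset.mem_filter.1 hw
  have hx := wordBase_mem_wordCube w
  obtain ⟨i, hi, hball⟩ := mem_iUnion₂.1 (hcover (mem_approx.2 ⟨w, hwm, hret, hx⟩))
  have hlen : (w.take (k i)).length = k i := by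
    rw [List.length_take, mem_words.1 hwm, min_eq_left (hk i hi)]
  have hstrip : w.take (k i) ∈ stripWords M a (b i) (d + 1) (w.take (k i)).length := by
    refine mem_stripWords_of_mem_wordCube ha
      (wordCube_subset_of_prefix hM (w.take_prefix (k i)) hx) ?_
    rw [hlen, ← one_div_pow, one_div]
    exact (Metric.mem_ball.1 hball).le
  rw [hlen] at hstrip
  exact Finset.mem_biUnion.2 ⟨i, hi, Finset.mem_filter.2
    ⟨mem_descendants.2 ⟨mem_words.1 hwm, hS i hi hstrip⟩, hret⟩⟩

lemma percLimit_nonempty_of_frequently_retainedCount_pos (hM : 1 < M) {ω : PercSpace d M}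
    (h : ∃ᶠ m in Filter.atTop, 0 < retainedCount (words d M m) ω) :
    (percLimit d M ω).Nonempty := by
  classical
  by_contra hE
  obtain ⟨n, hn⟩ := (percLimit_eq_empty_iff hM).1 (not_nonempty_iff_eq_empty.1 hE)
  obtain ⟨m, hm, hnm⟩ := (h.and_eventually (Filter.eventually_ge_atTop n)).exists
  obtain ⟨w, hw⟩ := Finset.card_pos.1 hm
  obtain ⟨hwm, hret⟩ := Finset.mem_filter.1 hw
  have hlen : w.length = m := mem_words.1 hwm
  exact hn (w.take n) (by simp [hlen, hnm]) (retained_of_prefix (w.take_prefix n) hret)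

lemma sum_retainedCount_lt_of_mem_balancedEvent {ι : Type*} {ω : PercSpace d M} {m n₀ : ℕ}
    {𝓕 : ℕ → Finset (Finset (List (Alpha d M)))} {l τ : ℝ} (hl : 0 < l)
    (hω : ω ∈ balancedEvent 𝓕 l τ n₀ m) {I : Finset ι} {k : ι → ℕ}
    {S : ι → Finset (List (Alpha d M))} (hk : ∀ i ∈ I, k i ∈ Finset.Icc n₀ m)
    (hS : ∀ i ∈ I, S i ∈ 𝓕 (k i)) (hsum : ∑ i ∈ I, 1 / τ ^ k i < 1 / 2) :
    ∑ i ∈ I, retainedCount (descendants (k i) m (S i)) ω < retainedCount (words d M m) ω := by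
  have hle : ∀ i ∈ I,
      (retainedCount (descendants (k i) m (S i)) ω : ℝ) ≤ l ^ m * (1 / τ ^ k i) := by
    intro i hi
    rw [mul_one_div]
    exact le_of_not_ge fun h => hω.2 (mem_biUnion (hk i hi) (mem_biUnion (hS i hi) h))
  have hlt : ∑ i ∈ I, (retainedCount (descendants (k i) m (S i)) ω : ℝ) <
      retainedCount (words d M m) ω :=
    calc ∑ i ∈ I, (retainedCount (descendants (k i) m (S i)) ω : ℝ)
        ≤ ∑ i ∈ I, l ^ m * (1 / τ ^ k i) := Finset.sum_le_sum hle
      _ = l ^ m * ∑ i ∈ I, 1 / τ ^ k i := (Finset.mul_sum _ _ _).symm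
      _ < l ^ m * (1 / 2) := by gcongr
      _ = l ^ m / 2 := by ring
      _ ≤ retainedCount (words d M m) ω := hω.1
  exact_mod_cast hlt

/-- A mass-distribution argument: a cheap cover of the projection by intervals would cover all
retained cubes of a deep level by sparsely populated strips. -/
lemma le_dimH_image_of_frequently_mem_balancedEvent (hM : 1 < M) {l : ℝ} (hl : 0 < l) {t : NNReal}
    (ht : 0 < t) {𝓕 : ℕ → Finset (Finset (List (Alpha d M)))} {n₀ : ℕ} {ω : PercSpace d M}
    (hω : ∃ᶠ m in Filter.atTop, ω ∈ balancedEvent 𝓕 l ((M : ℝ) ^ (t : ℝ)) n₀ m)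
    {a : Fin d → ℝ} (ha : ‖a‖ = 1)
    (h𝓕 : ∀ k, ∀ b : ℝ, |b| ≤ d → ∃ S ∈ 𝓕 k, stripWords M a b (d + 1) k ⊆ S) :
    (t : ℝ≥0∞) ≤ dimH (scalarProj a '' percLimit d M ω) := by
  by_contra! hdim
  have hM0 : (0 : ℝ) < M := by positivity
  have hE : (percLimit d M ω).Nonempty :=
    percLimit_nonempty_of_frequently_retainedCount_pos hM <| hω.mono fun m hm =>
      Nat.cast_pos.1 ((half_pos (pow_pos hl m)).trans_le hm.1)
  obtain ⟨b, k, hb, hk, hcover, hsum⟩ := exists_cover_ball_pow_of_hausdorffMeasure_eq_zero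
    (inv_pos.2 hM0) (inv_lt_one_of_one_lt₀ (Nat.one_lt_cast.2 hM)) (NNReal.coe_pos.2 ht)
    (hausdorffMeasure_of_dimH_lt hdim) (hE.image _) n₀ (ENNReal.half_pos one_ne_zero)
  have hbd : ∀ i, |b i| ≤ d := fun i => by
    obtain ⟨x, hx, hxb⟩ := hb i
    exact hxb ▸ abs_scalarProj_le hM ha hx
  choose S hS𝓕 hS using fun i => h𝓕 (k i) (b i) (hbd i)
  set V : ℕ → Set (EuclideanSpace ℝ (Fin d)) := fun i =>
    scalarProj a ⁻¹' Metric.ball (b i) ((M : ℝ)⁻¹ ^ k i)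
  have hV : ∀ i, IsOpen (V i) := fun i => Metric.isOpen_ball.preimage (continuous_scalarProj a)
  obtain ⟨n, hn⟩ := exists_approx_subset_of_isOpen hM ω (isOpen_iUnion hV) (by
    rw [← preimage_iUnion]
    exact image_subset_iff.1 hcover)
  obtain ⟨I, hI⟩ := (isCompact_approx ω n).elim_finite_subcover V hV hn
  obtain ⟨m, hm, hnm, hkm⟩ := (hω.and_eventually ((Filter.eventually_ge_atTop n).and
    (Filter.eventually_ge_atTop (I.sup k)))).exists
  have hkI : ∀ i ∈ I, k i ≤ m := fun i hi => (Finset.le_sup hi).trans hkm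
  refine (retainedCount_words_le_sum hM ha hkI (fun i _ => hS i)
    ((approx_antitone hM ω hnm).trans hI)).not_gt <| sum_retainedCount_lt_of_mem_balancedEvent hl hm
      (fun i hi => Finset.mem_Icc.2 ⟨hk i, hkI i hi⟩) (fun i _ => hS𝓕 i) ?_
  have hfin := (ENNReal.sum_le_tsum I).trans_lt hsum
  rw [← ENNReal.ofReal_sum_of_nonneg fun _ _ => by positivity] at hfin
  have hreal := (ENNReal.ofReal_lt_iff_lt_toReal (by positivity) (by simp)).1 hfin
  simpa [Real.inv_rpow] using hreal

end Projection

section Thin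

variable {d M : ℕ} {p : ℝ} {P : Measure (PercSpace d M)}

/-- The event that some normalised linear projection of the limit set has dimension less
than `t`. -/
def thinEvent (t : NNReal) : Set (PercSpace d M) :=
  {ω | ∃ a : Fin d → ℝ, ‖a‖ = 1 ∧ dimH (scalarProj a '' percLimit d M ω) < t}

lemma measure_thinEvent_lt_one (hd : d ≠ 0) (hM : 1 < M) (hp : 0 ≤ p) (hp1 : p ≤ 1)
    (hP : IsBernoulliPerc d M p P) {t : NNReal} (ht : 0 < t) (htM : (M : ℝ) ^ (t : ℝ) < M)
    (htl : (M : ℝ) ^ (t : ℝ) < meanOffspring d M p) :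
    P (thinEvent t) < 1 := by
  have := hP.1
  have : (0 : ℝ) < M := by positivity
  have hl : 1 < meanOffspring d M p :=
    (Real.one_lt_rpow (Nat.one_lt_cast.2 hM) (NNReal.coe_pos.2 ht)).trans htl
  choose 𝓕 hcard hbranch hcover using exists_stripFamily (d := d) hM (d + 1)
  have hYτ : p * (M : ℝ) ^ (d - 1) * (M : ℝ) ^ (t : ℝ) < meanOffspring d M p := by
    have hp0 : 0 < p := pos_of_mul_pos_right (zero_lt_one.trans hl) (by positivity)
    calc p * (M : ℝ) ^ (d - 1) * (M : ℝ) ^ (t : ℝ) < p * (M : ℝ) ^ (d - 1) * M := by gcongr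
      _ = meanOffspring d M p := by
        rw [mul_assoc, pow_sub_one_mul hd, mul_comm, meanOffspring]
  obtain ⟨n₀, hpos⟩ := exists_measure_frequently_balancedEvent_pos hp hp1 hl hP (by positivity)
    (by positivity) (by positivity) (by positivity) (by positivity) htl hYτ hcard hbranch
  set L : Set (PercSpace d M) := {ω | ∃ᶠ m in Filter.atTop,
    ω ∈ balancedEvent 𝓕 (meanOffspring d M p) ((M : ℝ) ^ (t : ℝ)) n₀ m}
  have hL : MeasurableSet L := by
    have hlim : L = Filter.limsup (balancedEvent 𝓕 (meanOffspring d M p) ((M : ℝ) ^ (t : ℝ)) n₀)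
        Filter.atTop := Set.ext fun _ => Filter.mem_limsup_iff_frequently_mem.symm
    exact hlim ▸ MeasurableSet.measurableSet_limsup fun m => measurableSet_balancedEvent 𝓕 _ _ n₀ m
  have hsub : thinEvent t ⊆ Lᶜ := fun ω ⟨a, ha, hdim⟩ hω =>
    hdim.not_ge <| le_dimH_image_of_frequently_mem_balancedEvent hM (zero_lt_one.trans hl) ht hω ha
      fun k b hb => by simpa using hcover k a ha b hb
  calc P (thinEvent t) ≤ P Lᶜ := measure_mono hsub
    _ = 1 - P L := prob_compl_eq_one_sub hL
    _ < 1 := ENNReal.sub_lt_self one_ne_top one_ne_zero hpos.ne'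

end Thin

/-! ### Self-similarity -/

section IndepFun

variable {Ω ι κ 𝓧 : Type*} [MeasurableSpace Ω] [MeasurableSpace 𝓧] {μ : Measure Ω}

lemma iIndepFun_curry {X : ι → κ → Ω → 𝓧} (hX : ∀ i j, Measurable (X i j))
    (h : iIndepFun (fun q : ι × κ => X q.1 q.2) μ) : iIndepFun (fun i ω j => X i j ω) μ := by
  have := h.isProbabilityMeasure
  have (i : ι) (j : κ) : IsProbabilityMeasure (μ.map (X i j)) :=
    Measure.isProbabilityMeasure_map (hX i j).aemeasurable
  have hrow (i : ι) : μ.map (fun ω j => X i j ω) = Measure.infinitePi fun j => μ.map (X i j) :=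
    (h.precomp (Prod.mk_right_injective i)).map_fun_eq_infinitePi_map (hX i)
  rw [iIndepFun_iff_map_fun_eq_infinitePi_map fun i => measurable_pi_iff.2 (hX i)]
  simp_rw [hrow]
  rw [← Measure.infinitePi_map_curry fun i j => μ.map (X i j),
    ← h.map_fun_eq_infinitePi_map (X := fun q : ι × κ => X q.1 q.2) fun q => hX q.1 q.2,
    Measure.map_map (by fun_prop) (by fun_prop)]
  rfl

lemma indepFun_pi_of_notMem_range {X : ι → Ω → 𝓧} (hX : ∀ i, Measurable (X i))
    (h : iIndepFun X μ) {i : ι} {f : κ → ι} (hf : i ∉ range f) :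
    IndepFun (X i) (fun ω j => X (f j) ω) μ := by
  classical
  have := h.isProbabilityMeasure
  refine IndepFun.indepFun_process (hX i) (fun j => hX (f j)) fun I => ?_
  have hdisj : Disjoint {i} (I.image f) := by
    rw [Finset.disjoint_singleton_left, Finset.mem_image]
    exact fun ⟨j, _, hj⟩ => hf ⟨j, hj⟩
  exact (h.indepFun_finset _ _ hdisj hX).comp
    (measurable_pi_apply (⟨i, Finset.mem_singleton_self i⟩ : ({i} : Finset ι)))
    (measurable_pi_iff.2 fun j : I =>
      measurable_pi_apply (⟨f j, Finset.mem_image_of_mem f j.2⟩ : I.image f))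

end IndepFun

lemma measurableSet_eval_eq {ι : Type*} (i : ι) (b : Bool) :
    MeasurableSet {ω : ι → Bool | ω i = b} :=
  measurableSet_eq_fun (measurable_pi_apply i) measurable_const

section SelfSimilarity

variable {d M : ℕ} {p : ℝ} {P : Measure (PercSpace d M)}

lemma measure_eval_eq (hP : IsBernoulliPerc d M p P) (w : Word d M) (b : Bool) :
    P {ω | ω w = b} = if b then ENNReal.ofReal p else ENNReal.ofReal (1 - p) := by
  simpa using hP.2 {w} fun _ => b

lemma measure_preimage_restrict_singleton (hP : IsBernoulliPerc d M p P) (S : Finset (Word d M))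
    (x : S → Bool) :
    P (S.restrict ⁻¹' {x}) =
      ∏ w, if x w then ENNReal.ofReal p else ENNReal.ofReal (1 - p) := by
  classical
  have h := hP.2 S fun w => if hw : w ∈ S then x ⟨w, hw⟩ else true
  rw [← Finset.prod_coe_sort] at h
  convert h using 2 with w
  · ext ω
    simp +contextual [funext_iff]
  · simp

lemma isBernoulliPerc_unique {Q : Measure (PercSpace d M)} (hP : IsBernoulliPerc d M p P)
    (hQ : IsBernoulliPerc d M p Q) : P = Q := by
  have := hQ.1
  refine IsProjectiveLimit.unique (P := fun S => Q.map S.restrict) (fun S => ?_) fun S => rfl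
  refine Measure.ext_of_singleton fun x => ?_
  rw [Measure.map_apply (by fun_prop) (measurableSet_singleton x),
    Measure.map_apply (by fun_prop) (measurableSet_singleton x),
    measure_preimage_restrict_singleton hP, measure_preimage_restrict_singleton hQ]

lemma iIndepFun_eval (hP : IsBernoulliPerc d M p P) :
    iIndepFun (fun (w : Word d M) (ω : PercSpace d M) => ω w) P := by
  have := hP.1
  refine iIndepFun_iff_finset.2 fun S =>
    (iIndepFun_iff_map_fun_eq_pi_map fun w => (measurable_pi_apply w.1).aemeasurable).2 <|
      Measure.ext_of_singleton fun x => ?_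
  have (w : Word d M) : IsProbabilityMeasure (P.map fun ω => ω w) :=
    Measure.isProbabilityMeasure_map (measurable_pi_apply w).aemeasurable
  rw [Measure.map_apply (measurable_pi_iff.2 fun w => measurable_pi_apply w.1)
    (measurableSet_singleton x), Measure.pi_singleton]
  refine (measure_preimage_restrict_singleton hP S x).trans (Finset.prod_congr rfl fun w _ => ?_)
  rw [← measure_eval_eq hP w (x w)]
  exact (Measure.map_apply (measurable_pi_apply _) (measurableSet_singleton _)).symm

/-- The labeling of the subtree rooted at the first-level cube `i`. -/
def shift (i : Alpha d M) (ω : PercSpace d M) : PercSpace d M :=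
  fun u => ω ⟨i :: u.1, List.cons_ne_nil i u.1⟩

lemma measurePreserving_shift (hP : IsBernoulliPerc d M p P) (i : Alpha d M) :
    MeasurePreserving (shift i) P P := by
  have := hP.1
  have hmeas : Measurable (shift i) := measurable_pi_iff.2 fun _ => measurable_pi_apply _
  refine ⟨hmeas, isBernoulliPerc_unique ⟨Measure.isProbabilityMeasure_map hmeas.aemeasurable,
    fun S b => ?_⟩ hP⟩
  let f : Word d M → Word d M := fun u => ⟨i :: u.1, List.cons_ne_nil i u.1⟩
  have hf : Function.Injective f :=
    fun u v h => Subtype.ext (List.cons.inj (Subtype.ext_iff.1 h)).2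
  have hS : MeasurableSet {ω : PercSpace d M | ∀ w ∈ S, ω w = b w} := by
    simp only [ofPred_forall]
    exact Finset.measurableSet_biInter S fun w _ => measurableSet_eval_eq w (b w)
  rw [Measure.map_apply hmeas hS]
  have h := hP.2 (S.map ⟨f, hf⟩) (Function.extend f b fun _ => true)
  simp only [Finset.mem_map, Finset.prod_map, Function.Embedding.coeFn_mk, forall_exists_index,
    and_imp, forall_apply_eq_imp_iff₂, hf.extend_apply] at h
  exact h

/-- The labelings for which each retained first-level cube carries a labeling in `B`. -/
def inherited (B : Set (PercSpace d M)) : Set (PercSpace d M) :=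
  {ω | ∀ i : Alpha d M, ω ⟨[i], List.cons_ne_nil i []⟩ = true → shift i ω ∈ B}

lemma inherited_mono {B C : Set (PercSpace d M)} (h : B ⊆ C) : inherited B ⊆ inherited C :=
  fun _ hω i hi => h (hω i hi)

lemma measure_shift_mem (hP : IsBernoulliPerc d M p P) {B : Set (PercSpace d M)}
    (hB : MeasurableSet B) (i : Alpha d M) :
    P {ω | ω ⟨[i], List.cons_ne_nil i []⟩ = true → shift i ω ∈ B} =
      ENNReal.ofReal (1 - p) + ENNReal.ofReal p * P B := by
  set r : Word d M := ⟨[i], List.cons_ne_nil i []⟩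
  have hindep : IndepFun (fun ω : PercSpace d M => ω r) (shift i) P :=
    indepFun_pi_of_notMem_range measurable_pi_apply (iIndepFun_eval hP) fun ⟨u, hu⟩ =>
      u.2 (List.cons.inj (Subtype.ext_iff.1 hu)).2
  have hsplit : {ω : PercSpace d M | ω r = true → shift i ω ∈ B} =
      {ω | ω r = false} ∪ ({ω | ω r = true} ∩ shift i ⁻¹' B) := by
    ext ω
    cases h : ω r <;> simp [h]
  have hmul := hindep.measure_inter_preimage_eq_mul {true} B (measurableSet_singleton true) hB
  have hdisj : Disjoint {ω : PercSpace d M | ω r = false}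
      ({ω | ω r = true} ∩ shift i ⁻¹' B) :=
    disjoint_left.2 fun ω h h' => Bool.false_ne_true (h.symm.trans h'.1)
  have hshift := measurePreserving_shift hP i
  rw [hsplit, measure_union hdisj ((measurableSet_eval_eq r true).inter (hshift.measurable hB)),
    measure_eval_eq hP]
  refine congrArg _ (hmul.trans ?_)
  rw [hshift.measure_preimage hB.nullMeasurableSet]
  exact congrArg (· * P B) (measure_eval_eq hP r true)

lemma measure_inherited (hP : IsBernoulliPerc d M p P) {B : Set (PercSpace d M)}
    (hB : MeasurableSet B) :
    P (inherited B) = (ENNReal.ofReal (1 - p) + ENNReal.ofReal p * P B) ^ M ^ d := by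
  have hblocks : iIndepFun (fun (i : Alpha d M) (ω : PercSpace d M) (u : List (Alpha d M)) =>
      ω ⟨i :: u, List.cons_ne_nil i u⟩) P :=
    iIndepFun_curry (fun _ _ => measurable_pi_apply _) <| (iIndepFun_eval hP).precomp
      (g := fun q : Alpha d M × List (Alpha d M) => ⟨q.1 :: q.2, List.cons_ne_nil q.1 q.2⟩)
      fun q q' h => Prod.ext (List.cons.inj (Subtype.ext_iff.1 h)).1
        (List.cons.inj (Subtype.ext_iff.1 h)).2
  set C : Set (List (Alpha d M) → Bool) := {y | y [] = true → (fun u => y u.1) ∈ B}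
  have hC : MeasurableSet C :=
    (measurableSet_eval_eq [] true).imp
      (measurable_pi_iff.2 (fun u : Word d M => measurable_pi_apply u.1) hB)
  have hinter : inherited B = ⋂ i ∈ Finset.univ,
      (fun (ω : PercSpace d M) u => ω ⟨i :: u, List.cons_ne_nil i u⟩) ⁻¹' C := by
    ext ω
    simp only [mem_iInter, Finset.mem_univ, true_imp_iff]
    rfl
  rw [hinter, hblocks.measure_inter_preimage_eq_mul Finset.univ fun _ _ => hC]
  refine (Finset.prod_congr rfl fun i _ => measure_shift_mem hP hB i).trans ?_
  simp

end SelfSimilarity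

/-! ### The zero-one law -/

lemma le_of_le_pow_of_pow_le {p η q : ℝ} {N : ℕ} (hp0 : 0 < p) (hp1 : p ≤ 1) (hN : 2 ≤ N)
    (hη0 : 0 ≤ η) (hq1 : q < 1) (hq : q ≤ (1 - p + p * q) ^ N) (hη : (1 - p + p * η) ^ N ≤ η) :
    q ≤ η := by
  by_contra! hlt
  set s : ℝ := (1 - q) / (1 - η) with hs
  have h1η : 0 < 1 - η := by linarith
  have hs0 : 0 < s := div_pos (by linarith) h1η
  have hs1 : s < 1 := by rw [hs, div_lt_one h1η]; linarith
  have hcomb : s * (1 - p + p * η) + (1 - s) * 1 = 1 - p + p * q := by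
    rw [hs]; field_simp; ring
  have hconv := (strictConvexOn_pow hN).2 (x := 1 - p + p * η) (y := 1)
    (by simp only [mem_Ici]; nlinarith) (by simp) (by nlinarith) hs0 (sub_pos.2 hs1) (by ring)
  simp only [smul_eq_mul, one_pow, hcomb] at hconv
  have : s * (1 - p + p * η) ^ N ≤ s * η := by gcongr
  have : s * η + (1 - s) * 1 = q := by rw [hs]; field_simp; ring
  linarith

section ZeroOne

variable {d M : ℕ} {p : ℝ} {P : Measure (PercSpace d M)}

lemma measureReal_inherited (hp : 0 ≤ p) (hp1 : p ≤ 1) (hP : IsBernoulliPerc d M p P)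
    {B : Set (PercSpace d M)} (hB : MeasurableSet B) :
    P.real (inherited B) = (1 - p + p * P.real B) ^ M ^ d := by
  have := hP.1
  rw [measureReal_def, measure_inherited hP hB, toReal_pow, toReal_add (by finiteness)
    (by finiteness), toReal_mul, toReal_ofReal (sub_nonneg.2 hp1), toReal_ofReal hp,
    measureReal_def]

/-- The generating function `x ↦ (1 - p + p * x) ^ M ^ d` is strictly convex and fixes `1`, so below
`1` it has no subinvariant point to the left of a superinvariant one. -/
lemma measure_diff_eq_zero_of_subset_inherited (hd : d ≠ 0) (hM : 1 < M) (hp0 : 0 < p)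
    (hp1 : p ≤ 1) (hP : IsBernoulliPerc d M p P) {A B : Set (PercSpace d M)}
    (hA : MeasurableSet A) (hAi : inherited A ⊆ A) (hAB : A ⊆ B) (hBi : B ⊆ inherited B)
    (hB : P B < 1) : P (B \ A) = 0 := by
  have := hP.1
  have hB' : P.real (toMeasurable P B) = P.real B := by
    rw [measureReal_def, measure_toMeasurable, measureReal_def]
  have hsuper : P.real B ≤ (1 - p + p * P.real B) ^ M ^ d := by
    rw [← hB', ← measureReal_inherited hp0.le hp1 hP (measurableSet_toMeasurable P B), hB']
    exact measureReal_mono (hBi.trans (inherited_mono (subset_toMeasurable P B)))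
  have hsub : (1 - p + p * P.real A) ^ M ^ d ≤ P.real A := by
    rw [← measureReal_inherited hp0.le hp1 hP hA]
    exact measureReal_mono hAi
  have hB1 : P.real B < 1 := by
    simpa [measureReal_def] using (toReal_lt_toReal (measure_ne_top P B) one_ne_top).2 hB
  have hle : P.real B ≤ P.real A := le_of_le_pow_of_pow_le hp0 hp1 (Nat.one_lt_pow hd hM)
    measureReal_nonneg hB1 hsuper hsub
  rw [measure_sdiff hAB hA.nullMeasurableSet (measure_ne_top P A), tsub_eq_zero_iff_le]
  exact (toReal_le_toReal (measure_ne_top P B) (measure_ne_top P A)).1 hle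

lemma measurableSet_percLimit_eq_empty (hM : 1 < M) :
    MeasurableSet {ω | percLimit d M ω = ∅} := by
  simp only [percLimit_eq_empty_iff hM, ofPred_exists, ofPred_forall]
  exact .iUnion fun n => Finset.measurableSet_biInter _ fun w _ =>
    (measurableSet_retained w).compl

lemma retained_cons {ω : PercSpace d M} {i : Alpha d M} {w : List (Alpha d M)} :
    Retained d M ω (i :: w) ↔
      ω ⟨[i], List.cons_ne_nil i []⟩ = true ∧ Retained d M (shift i ω) w := by
  refine ⟨fun h => ⟨h _ _ (by simp), fun u hu huw => h _ _ (by simpa)⟩, fun h u hu huw => ?_⟩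
  obtain _ | ⟨j, u⟩ := u
  · exact absurd rfl hu
  obtain ⟨rfl, hprefix⟩ := List.cons_prefix_cons.1 huw
  obtain rfl | hu' := eq_or_ne u []
  · exact h.1
  · exact h.2 u hu' hprefix

lemma inherited_percLimit_eq_empty_subset (hM : 1 < M) :
    inherited {ω | percLimit d M ω = ∅} ⊆ {ω | percLimit d M ω = ∅} := by
  intro ω hω
  have hext (i : Alpha d M) : ∃ n, ω ⟨[i], List.cons_ne_nil i []⟩ = true →
      ∀ w ∈ words d M n, ¬ Retained d M (shift i ω) w := by
    by_cases hi : ω ⟨[i], List.cons_ne_nil i []⟩ = true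
    · exact ((percLimit_eq_empty_iff hM).1 (hω i hi)).imp fun n hn _ => hn
    · exact ⟨0, fun h => absurd h hi⟩
  choose n hn using hext
  refine (percLimit_eq_empty_iff hM).2 ⟨Finset.univ.sup n + 1, fun w hw hr => ?_⟩
  obtain _ | ⟨i, w⟩ := w
  · simp at hw
  have hin : n i ≤ Finset.univ.sup n := Finset.le_sup (Finset.mem_univ i)
  obtain ⟨hi, hr⟩ := retained_cons.1 hr
  refine hn i hi (w.take (n i)) ?_ (retained_of_prefix (List.take_prefix _ _) hr)
  simp only [mem_words, List.length_cons, List.length_take] at hw ⊢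
  omega

/-- The similarity of the unit cube onto the first-level cube `i`. -/
def subcubeMap (i : Alpha d M) (x : EuclideanSpace ℝ (Fin d)) : EuclideanSpace ℝ (Fin d) :=
  WithLp.toLp 2 fun j => (i j + x j) / M

lemma subcubeMap_mem_wordCube (hM : M ≠ 0) {i : Alpha d M} {w : List (Alpha d M)}
    {x : EuclideanSpace ℝ (Fin d)} (hx : x ∈ wordCube d M w) :
    subcubeMap i x ∈ wordCube d M (i :: w) := by
  have : (0 : ℝ) < M := by positivity
  refine mem_wordCube.2 fun j => ?_
  have hlen : ((M : ℝ) ^ (i :: w).length)⁻¹ = ((M : ℝ) ^ w.length)⁻¹ / M := by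
    rw [List.length_cons, pow_succ, mul_inv, div_eq_mul_inv]
  obtain ⟨hl, hu⟩ := mem_wordCube.1 hx j
  simp only [subcubeMap, wordBase_cons hM, hlen, ← add_div, add_assoc]
  constructor <;> gcongr

lemma subcubeMap_mem_percLimit (hM : 1 < M) {ω : PercSpace d M} {i : Alpha d M}
    (hi : ω ⟨[i], List.cons_ne_nil i []⟩ = true) {x : EuclideanSpace ℝ (Fin d)}
    (hx : x ∈ percLimit d M (shift i ω)) : subcubeMap i x ∈ percLimit d M ω := by
  rw [percLimit_eq_iInter hM, mem_iInter] at hx ⊢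
  refine fun n => approx_antitone hM ω n.le_succ (mem_approx.2 ?_)
  obtain ⟨w, hw, hr, hxw⟩ := mem_approx.1 (hx n)
  exact ⟨i :: w, by simpa using hw, retained_cons.2 ⟨hi, hr⟩,
    subcubeMap_mem_wordCube (by omega) hxw⟩

lemma scalarProj_subcubeMap (a : Fin d → ℝ) (i : Alpha d M) (x : EuclideanSpace ℝ (Fin d)) :
    scalarProj a (subcubeMap i x) = ((a ⬝ᵥ fun j => (i j : ℝ)) + scalarProj a x) / M := by
  simp only [scalarProj, subcubeMap, dotProduct, mul_div_assoc', mul_add, Finset.sum_add_distrib,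
    ← Finset.sum_div]

lemma dimH_image_percLimit_shift_le (hM : 1 < M) {ω : PercSpace d M} {i : Alpha d M}
    (hi : ω ⟨[i], List.cons_ne_nil i []⟩ = true) (a : Fin d → ℝ) :
    dimH (scalarProj a '' percLimit d M (shift i ω)) ≤ dimH (scalarProj a '' percLimit d M ω) := by
  have hM0 : (M : ℝ) ≠ 0 := by positivity
  let g : ℝ → ℝ := fun s => M * s - a ⬝ᵥ fun j => (i j : ℝ)
  have hg : ContDiff ℝ 1 g := by fun_prop
  refine (dimH_mono ?_).trans (hg.contDiffOn.dimH_image_le convex_univ (subset_univ _))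
  rintro _ ⟨x, hx, rfl⟩
  refine ⟨_, mem_image_of_mem _ (subcubeMap_mem_percLimit hM hi hx), ?_⟩
  simp only [g, scalarProj_subcubeMap, mul_div_cancel₀ _ hM0, add_sub_cancel_left]

lemma thinEvent_subset_inherited (hM : 1 < M) (t : NNReal) :
    (thinEvent t : Set (PercSpace d M)) ⊆ inherited (thinEvent t) :=
  fun _ ⟨a, ha, hdim⟩ _ hi => ⟨a, ha, (dimH_image_percLimit_shift_le hM hi a).trans_lt hdim⟩

lemma percLimit_eq_empty_subset_thinEvent (hd : d ≠ 0) {t : NNReal} (ht : 0 < t) :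
    {ω | percLimit d M ω = ∅} ⊆ thinEvent t := by
  intro ω (hω : percLimit d M ω = ∅)
  have : NeZero d := ⟨hd⟩
  obtain ⟨a, ha⟩ := exists_norm_eq (Fin d → ℝ) zero_le_one
  exact ⟨a, ha, by simpa [hω] using ht⟩

lemma ae_le_dimH_image_scalarProj (hM : 1 < M) (hp0 : 0 < p) (hp1 : p ≤ 1)
    (hP : IsBernoulliPerc d M p P) {t : NNReal} (ht : 0 < t) (htM : (M : ℝ) ^ (t : ℝ) < M)
    (htl : (M : ℝ) ^ (t : ℝ) < meanOffspring d M p) :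
    ∀ᵐ ω ∂P, (percLimit d M ω).Nonempty → ∀ a : Fin d → ℝ, ‖a‖ = 1 →
      t ≤ dimH (scalarProj a '' percLimit d M ω) := by
  obtain rfl | hd := eq_or_ne d 0
  · exact .of_forall fun _ _ a ha => absurd ha (by simp [Subsingleton.elim a 0, -Matrix.zero_empty])
  have hnull := measure_diff_eq_zero_of_subset_inherited hd hM hp0 hp1 hP
    (measurableSet_percLimit_eq_empty hM) (inherited_percLimit_eq_empty_subset hM)
    (percLimit_eq_empty_subset_thinEvent hd ht) (thinEvent_subset_inherited hM t)
    (measure_thinEvent_lt_one hd hM hp0.le hp1 hP ht htM htl)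
  filter_upwards [measure_eq_zero_iff_ae_notMem.1 hnull] with ω hω hne a ha
  by_contra! hdim
  exact hω ⟨⟨a, ha, hdim⟩, hne.ne_empty⟩

end ZeroOne

/-! ### The upper bound for the dimension -/

section UpperBound

variable {d M : ℕ} {p : ℝ} {P : Measure (PercSpace d M)}

lemma ediam_image_ofLp_wordCube_le (w : List (Alpha d M)) :
    Metric.ediam (WithLp.ofLp '' wordCube d M w) ≤ ENNReal.ofReal (((M : ℝ) ^ w.length)⁻¹) := by
  refine Metric.ediam_le ?_
  rintro _ ⟨x, hx, rfl⟩ _ ⟨y, hy, rfl⟩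
  refine edist_pi_le_iff.2 fun i => ?_
  rw [edist_dist, Real.dist_eq]
  obtain ⟨hxl, hxu⟩ := mem_wordCube.1 hx i
  obtain ⟨hyl, hyu⟩ := mem_wordCube.1 hy i
  exact ENNReal.ofReal_le_ofReal (abs_sub_le_iff.2 ⟨by linarith, by linarith⟩)

lemma dimH_image_ofLp (s : Set (EuclideanSpace ℝ (Fin d))) : dimH (WithLp.ofLp '' s) = dimH s :=
  (EuclideanSpace.equiv (Fin d) ℝ).dimH_image s

lemma dimH_percLimit_le_of_tendsto (hM : 1 < M) {ω : PercSpace d M} {t : NNReal}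
    (h : Filter.Tendsto (fun n => (retainedCount (words d M n) ω : ℝ≥0∞) *
      ENNReal.ofReal (((M : ℝ) ^ n)⁻¹) ^ (t : ℝ)) Filter.atTop (nhds 0)) :
    dimH (percLimit d M ω) ≤ t := by
  classical
  rw [← dimH_image_ofLp]
  refine dimH_le_of_hausdorffMeasure_ne_top (ne_top_of_le_ne_top zero_ne_top ?_)
  let S (n : ℕ) : Finset (List (Alpha d M)) := (words d M n).filter (Retained d M ω)
  have hdiam (n : ℕ) (w : S n) :
      Metric.ediam (WithLp.ofLp '' wordCube d M w.1) ≤ ENNReal.ofReal (((M : ℝ) ^ n)⁻¹) := by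
    have hlen : w.1.length = n := mem_words.1 (Finset.mem_filter.1 w.2).1
    simpa only [hlen] using ediam_image_ofLp_wordCube_le w.1
  have hmesh : Filter.Tendsto (fun n : ℕ => ENNReal.ofReal (((M : ℝ) ^ n)⁻¹)) Filter.atTop
      (nhds 0) := by
    rw [← ENNReal.ofReal_zero]
    exact ENNReal.tendsto_ofReal
      (tendsto_pow_atTop_atTop_of_one_lt (Nat.one_lt_cast.2 hM)).inv_tendsto_atTop
  have hcover (n : ℕ) :
      WithLp.ofLp '' percLimit d M ω ⊆ ⋃ w : S n, WithLp.ofLp '' wordCube d M w.1 := by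
    rintro _ ⟨x, hx, rfl⟩
    obtain ⟨w, hw, hr, hxw⟩ := mem_approx.1 (percLimit_subset_approx (n := n) hM ω hx)
    exact mem_iUnion.2 ⟨⟨w, Finset.mem_filter.2 ⟨hw, hr⟩⟩, mem_image_of_mem _ hxw⟩
  have hsum (n : ℕ) : ∑ w : S n, Metric.ediam (WithLp.ofLp '' wordCube d M w.1) ^ (t : ℝ) ≤
      retainedCount (words d M n) ω * ENNReal.ofReal (((M : ℝ) ^ n)⁻¹) ^ (t : ℝ) := by
    refine (Finset.sum_le_card_nsmul _ _ _ fun w _ =>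
      ENNReal.rpow_le_rpow (hdiam n w) t.coe_nonneg).trans_eq ?_
    rw [nsmul_eq_mul, Finset.card_univ, Fintype.card_coe, retainedCount]
  calc μH[t] (WithLp.ofLp '' percLimit d M ω)
    _ ≤ Filter.liminf (fun n => ∑ w : S n,
          Metric.ediam (WithLp.ofLp '' wordCube d M w.1) ^ (t : ℝ)) Filter.atTop :=
      Measure.hausdorffMeasure_le_liminf_sum _ _ _ hmesh _ (.of_forall hdiam) (.of_forall hcover)
    _ = 0 := (tendsto_of_tendsto_of_tendsto_of_le_of_le tendsto_const_nhds h
      (fun _ => zero_le) hsum).liminf_eq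

lemma ae_tendsto_retainedCount_mul_pow (hp : 0 ≤ p) (hP : IsBernoulliPerc d M p P) {r : ℝ}
    (hlr : meanOffspring d M p * r < 1) :
    ∀ᵐ ω ∂P, Filter.Tendsto (fun n => (retainedCount (words d M n) ω : ℝ≥0∞) *
      ENNReal.ofReal r ^ n) Filter.atTop (nhds 0) := by
  have hl : 0 ≤ meanOffspring d M p := by unfold meanOffspring; positivity
  have hmeas (n : ℕ) : Measurable fun ω =>
      (retainedCount (words d M n) ω : ℝ≥0∞) * ENNReal.ofReal r ^ n :=
    (measurable_retainedCount _).mul_const _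
  have hint : ∫⁻ ω, ∑' n, (retainedCount (words d M n) ω : ℝ≥0∞) * ENNReal.ofReal r ^ n ∂P ≠ ∞ := by
    have hterm (n : ℕ) :
        ∫⁻ ω, (retainedCount (words d M n) ω : ℝ≥0∞) * ENNReal.ofReal r ^ n ∂P =
          ENNReal.ofReal (meanOffspring d M p * r) ^ n := by
      rw [lintegral_mul_const _ (measurable_retainedCount _), lintegral_retainedCount_words hp hP,
        ENNReal.ofReal_pow hl, ← mul_pow, ENNReal.ofReal_mul hl]
    rw [lintegral_tsum fun n => (hmeas n).aemeasurable]
    simp only [hterm, ENNReal.tsum_geometric]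
    exact ENNReal.inv_ne_top.2 (tsub_pos_of_lt (ENNReal.ofReal_lt_one.2 hlr)).ne'
  filter_upwards [ae_lt_top (.tsum hmeas) hint] with ω hω
  exact ENNReal.tendsto_atTop_zero_of_tsum_ne_top hω.ne

lemma ae_dimH_percLimit_le (hM : 1 < M) (hp : 0 ≤ p) (hP : IsBernoulliPerc d M p P) {t : NNReal}
    (htl : meanOffspring d M p < (M : ℝ) ^ (t : ℝ)) : ∀ᵐ ω ∂P, dimH (percLimit d M ω) ≤ t := by
  have hM0 : (0 : ℝ) < M := by positivity
  have hlr : meanOffspring d M p * ((M : ℝ) ^ (t : ℝ))⁻¹ < 1 := by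
    rwa [← div_eq_mul_inv, div_lt_one (by positivity)]
  have hpow (n : ℕ) : ENNReal.ofReal (((M : ℝ) ^ n)⁻¹) ^ (t : ℝ) =
      ENNReal.ofReal ((M : ℝ) ^ (t : ℝ))⁻¹ ^ n := by
    rw [ENNReal.ofReal_rpow_of_pos (by positivity), ← ENNReal.ofReal_pow (by positivity),
      Real.inv_rpow (by positivity), inv_pow, Real.rpow_pow_comm hM0.le]
  filter_upwards [ae_tendsto_retainedCount_mul_pow hp hP hlr] with ω hω
  exact dimH_percLimit_le_of_tendsto hM (by simpa only [hpow] using hω)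

end UpperBound

section Dimension

variable {d M : ℕ} {p : ℝ} {P : Measure (PercSpace d M)}

lemma ae_dimH_percLimit_le_or_le_dimH_image_scalarProj (hM : 1 < M) (hp0 : 0 < p) (hp1 : p ≤ 1)
    (hP : IsBernoulliPerc d M p P) {s t : NNReal} (hs : 0 < s) (hs1 : s < 1) (hst : s < t) :
    ∀ᵐ ω ∂P, dimH (percLimit d M ω) ≤ t ∨ ((percLimit d M ω).Nonempty →
      ∀ a : Fin d → ℝ, ‖a‖ = 1 → s ≤ dimH (scalarProj a '' percLimit d M ω)) := by
  have hM1 : (1 : ℝ) < M := Nat.one_lt_cast.2 hM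
  obtain ht | ht := lt_or_ge (meanOffspring d M p) ((M : ℝ) ^ (t : ℝ))
  · filter_upwards [ae_dimH_percLimit_le hM hp0.le hP ht] with ω hω
    exact .inl hω
  · have hsM : (M : ℝ) ^ (s : ℝ) < M := Real.rpow_lt_self_of_one_lt hM1 hs1
    have hsl : (M : ℝ) ^ (s : ℝ) < meanOffspring d M p :=
      (Real.rpow_lt_rpow_of_exponent_lt hM1 hst).trans_le ht
    filter_upwards [ae_le_dimH_image_scalarProj hM hp0 hp1 hP hs hsM hsl] with ω hω
    exact .inr hω

lemma ae_min_one_dimH_percLimit_le (hM : 1 < M) (hp0 : 0 < p) (hp1 : p ≤ 1)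
    (hP : IsBernoulliPerc d M p P) :
    ∀ᵐ ω ∂P, (percLimit d M ω).Nonempty → ∀ a : Fin d → ℝ, ‖a‖ = 1 →
      min 1 (dimH (percLimit d M ω)) ≤ dimH (scalarProj a '' percLimit d M ω) := by
  have hrat : ∀ᵐ ω ∂P, ∀ q r : ℚ, 0 < Real.toNNReal q → Real.toNNReal q < 1 →
      Real.toNNReal q < Real.toNNReal r → dimH (percLimit d M ω) ≤ Real.toNNReal r ∨
        ((percLimit d M ω).Nonempty → ∀ a : Fin d → ℝ, ‖a‖ = 1 →
          Real.toNNReal q ≤ dimH (scalarProj a '' percLimit d M ω)) := by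
    simp only [ae_all_iff]
    exact fun q r => ae_dimH_percLimit_le_or_le_dimH_image_scalarProj hM hp0 hp1 hP
  filter_upwards [hrat] with ω hω hne a ha
  refine le_of_forall_lt fun c hc => ?_
  obtain ⟨q, -, hcq, hq⟩ := ENNReal.lt_iff_exists_rat_btwn.1 hc
  obtain ⟨r, -, hqr, hr⟩ := ENNReal.lt_iff_exists_rat_btwn.1 hq
  refine hcq.trans_le <| (hω q r ?_ ?_ ?_).resolve_left
    (hr.trans_le (min_le_right _ _)).not_ge hne a ha
  · exact ENNReal.coe_pos.1 (zero_le.trans_lt hcq)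
  · exact ENNReal.coe_lt_one_iff.1 (hq.trans_le (min_le_left _ _))
  · exact ENNReal.coe_lt_coe.1 hqr

lemma inner_eq_scalarProj (v x : EuclideanSpace ℝ (Fin d)) :
    inner ℝ v x = scalarProj v.ofLp x := by
  simp [scalarProj, PiLp.inner_apply, dotProduct, mul_comm]

lemma exists_norm_eq_one_and_dimH_image_scalarProj_le {v : EuclideanSpace ℝ (Fin d)} (hv : v ≠ 0) :
    ∃ a : Fin d → ℝ, ‖a‖ = 1 ∧ ∀ s : Set (EuclideanSpace ℝ (Fin d)),
      dimH (scalarProj a '' s) ≤ dimH ((fun x => inner ℝ v x) '' s) := by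
  have hv' : v.ofLp ≠ 0 := by simpa using hv
  refine ⟨‖v.ofLp‖⁻¹ • v.ofLp, norm_smul_inv_norm hv', fun s => ?_⟩
  have hscale : scalarProj (‖v.ofLp‖⁻¹ • v.ofLp) = (‖v.ofLp‖⁻¹ * ·) ∘ fun x => inner ℝ v x := by
    ext x
    simp [inner_eq_scalarProj, scalarProj]
  have hdiff : ContDiff ℝ 1 fun y : ℝ => ‖v.ofLp‖⁻¹ * y := by fun_prop
  rw [hscale, image_comp]
  exact hdiff.contDiffOn.dimH_image_le convex_univ (subset_univ _)

end Dimension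

lemma dimH_image_inner_le {E : Type*} [NormedAddCommGroup E] [InnerProductSpace ℝ E] (v : E)
    (s : Set E) :
    dimH ((fun x => inner ℝ v x) '' s) ≤ min 1 (dimH s) :=
  le_min ((dimH_mono (subset_univ _)).trans Real.dimH_univ.le) <|
    (innerSL ℝ v).lipschitz.dimH_image_le s

lemma dimH_image_lineProj (z : EuclideanSpace ℝ (Fin 2)) {v : EuclideanSpace ℝ (Fin 2)}
    (hv : v ≠ 0) (s : Set (EuclideanSpace ℝ (Fin 2))) :
    dimH (lineProj z v '' s) = dimH ((fun x => inner ℝ v x) '' s) := by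
  have hvv : inner ℝ v v ≠ 0 := inner_self_ne_zero.2 hv
  let f : ℝ → EuclideanSpace ℝ (Fin 2) := fun c => z + ((c - inner ℝ v z) / inner ℝ v v) • v
  have hf : ContDiff ℝ 1 f := by fun_prop
  have hproj : lineProj z v = f ∘ fun x => inner ℝ v x := by
    ext1 x
    simp only [lineProj, f, Function.comp_apply, real_inner_comm v, inner_sub_right]
  have hinv : (fun x => inner ℝ v x) ∘ lineProj z v = fun x => inner ℝ v x := by
    ext x
    simp only [hproj, f, Function.comp_apply, inner_add_right, real_inner_smul_right,
      div_mul_cancel₀ _ hvv, add_sub_cancel]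
  apply le_antisymm
  · rw [hproj, image_comp]
    exact hf.contDiffOn.dimH_image_le convex_univ (subset_univ _)
  · rw [← hinv, image_comp]
    exact (dimH_image_inner_le v _).trans (min_le_right _ _)

end FractalPercolation

open FractalPercolation in
theorem projection_dimension_all_oblique_lines_general {d M : ℕ} (hM : 2 ≤ M) {p : ℝ}
    (hp0 : 0 < p) (hp1 : p ≤ 1) {P : Measure (PercSpace d M)} (hP : IsBernoulliPerc d M p P) :
    ∀ᵐ ω ∂(ProbabilityTheory.cond P {ω | percLimit d M ω ≠ ∅}),
      ∀ v : EuclideanSpace ℝ (Fin d), v ≠ 0 →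
        dimH ((fun x => inner ℝ v x) '' percLimit d M ω) = min 1 (dimH (percLimit d M ω)) := by
  refine cond_absolutelyContinuous.ae_le ?_
  filter_upwards [ae_min_one_dimH_percLimit_le hM hp0 hp1 hP] with ω hω v hv
  refine (dimH_image_inner_le v _).antisymm ?_
  obtain hE | hE := (percLimit d M ω).eq_empty_or_nonempty
  · simp [hE]
  · obtain ⟨a, ha, hle⟩ := exists_norm_eq_one_and_dimH_image_scalarProj_le hv
    exact (hω hE a ha).trans (hle _)

/-- conditioned on `E ≠ ∅`, almost surely for all lines `ℓ` that are
not parallel to the coordinate axes, `dim_H (proj_ℓ E) = min 1 (dim_H E)`. -/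
theorem projection_dimension_all_oblique_lines
    (M : ℕ) (hM : 2 ≤ M) (p : ℝ) (hp0 : 0 < p) (hp1 : p ≤ 1)
    (P : Measure (PercSpace 2 M)) (hP : IsBernoulliPerc 2 M p P) :
    ∀ᵐ ω ∂(ProbabilityTheory.cond P {ω | percLimit 2 M ω ≠ ∅}),
      ∀ z v : EuclideanSpace ℝ (Fin 2), v 0 ≠ 0 → v 1 ≠ 0 →
        dimH (lineProj z v '' percLimit 2 M ω) = min 1 (dimH (percLimit 2 M ω)) := by
  filter_upwards [projection_dimension_all_oblique_lines_general hM hp0 hp1 hP] with ω hω z v hv0 _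
  have hv : v ≠ 0 := fun h => hv0 (by simp [h])
  rw [FractalPercolation.dimH_image_lineProj z hv, hω v hv]
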